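/- arXiv:2008.13393 — 3 statements merged into one kernel-verified Lean document; each statement's English description precedes it below -/
import Mathlib

section
/- Let X be a separable Banach space, T a bounded linear operator on X, X₀ a dense subset of X, and S : X₀ → X₀ a mapping satisfying T(S(x)) = x for all x ∈ X₀. If Λ is a countable, relatively compact, nonempty subset of the open interval (a_T(X₀,S), b_T(X₀,S)), then ⋂_{λ∈Λ} FHC(λT) ≠ ∅. -/
open Filter Topology
open scoped ENNReal NNReal

/-- Lower density of a set of natural numbers. -/
noncomputable def lowerDensity (E : Set ℕ) : ℝ :=
  Filter.liminf (fun n : ℕ =>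
    (∑ k ∈ Finset.range (n + 1), Set.indicator E (fun _ => (1 : ℝ)) k) / ((n : ℝ) + 1))
    Filter.atTop

/-- The set of frequently hypercyclic vectors of an operator. -/
noncomputable def FHC {X : Type*} [NormedAddCommGroup X] [NormedSpace ℝ X]
    (T : X →L[ℝ] X) : Set X :=
  {x | ∀ U : Set X, IsOpen U → U.Nonempty → 0 < lowerDensity {n : ℕ | (T ^ n) x ∈ U}}

/-- `a_T(X₀,S) = sup_{x ∈ X₀} limsup_n ‖Sⁿx‖^{1/n}`, computed in `ℝ≥0∞`. -/
noncomputable def aT {X : Type*} [NormedAddCommGroup X] (X₀ : Set X) (S : X₀ → X₀) : ℝ≥0∞ :=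
  ⨆ x : X₀, Filter.limsup
    (fun n : ℕ => (‖((S^[n] x : X₀) : X)‖₊ : ℝ≥0∞) ^ (1 / (n : ℝ))) Filter.atTop

/-- `b_T(X₀,S) = inf_{x ∈ X₀} (limsup_n ‖Tⁿx‖^{1/n})⁻¹`, computed in `ℝ≥0∞`
(so that it is `+∞` when the limsup vanishes). -/
noncomputable def bT {X : Type*} [NormedAddCommGroup X] [NormedSpace ℝ X]
    (T : X →L[ℝ] X) (X₀ : Set X) : ℝ≥0∞ :=
  ⨅ x : X₀, (Filter.limsup
    (fun n : ℕ => (‖(T ^ n) (x : X)‖₊ : ℝ≥0∞) ^ (1 / (n : ℝ))) Filter.atTop)⁻¹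

/-!
Fix a countable family of pairs `(λ, y)` with `λ ∈ Λ` and `y ∈ X₀`, the points `y` approximating a
countable basis of `X`. A common vector is the sum, over the pairs and over `n` in a set `A (λ, y)`
of positive lower density, of the vectors `λ⁻ⁿ Sⁿ y`. Under `(λT)ᵐ` with `m ∈ A (λ, y)` the term
`n = m` of the same pair becomes `y`. A term `λ'⁻ⁿ Sⁿ y'` becomes `(λ / λ') ^ min m n` times a
vector whose norm is at most `C ρ ^ |m - n|` with `ρ < 1`, uniformly for `λ, λ'` in the compact
interval spanned by `Λ`. The ratio is harmless when `λ = λ'`, and otherwise it is beaten by the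
geometric decay as soon as `|m - n| ≥ d * min m n` for a large constant `d`, so it suffices to
choose the sets `A` far enough apart, on geometrically growing blocks.
-/

section LowerDensity

theorem isBoundedUnder_ge_indicator_average (E : Set ℕ) :
    IsBoundedUnder (· ≥ ·) atTop (fun n : ℕ =>
      (∑ k ∈ Finset.range (n + 1), E.indicator (fun _ => (1 : ℝ)) k) / ((n : ℝ) + 1)) :=
  isBoundedUnder_of ⟨0, fun _ => div_nonneg
    (Finset.sum_nonneg fun _ _ => Set.indicator_nonneg (fun _ _ => zero_le_one) _) (by positivity)⟩

theorem isCoboundedUnder_ge_indicator_average (E : Set ℕ) :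
    IsCoboundedUnder (· ≥ ·) atTop (fun n : ℕ =>
      (∑ k ∈ Finset.range (n + 1), E.indicator (fun _ => (1 : ℝ)) k) / ((n : ℝ) + 1)) := by
  refine (isBoundedUnder_of ⟨1, fun n => (div_le_one (by positivity)).2 ?_⟩).isCoboundedUnder_ge
  calc ∑ k ∈ Finset.range (n + 1), E.indicator (fun _ => (1 : ℝ)) k
      ≤ ∑ _k ∈ Finset.range (n + 1), (1 : ℝ) :=
        Finset.sum_le_sum fun k _ => Set.indicator_le_self' (fun _ _ => zero_le_one) k
    _ = (n : ℝ) + 1 := by simp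

theorem lowerDensity_mono {E F : Set ℕ} (h : E ⊆ F) : lowerDensity E ≤ lowerDensity F := by
  refine liminf_le_liminf (.of_forall fun n => ?_) (isBoundedUnder_ge_indicator_average E)
    (isCoboundedUnder_ge_indicator_average F)
  gcongr

theorem le_lowerDensity_of_eventually_card {E : Set ℕ} {δ : ℝ}
    (h : ∀ᶠ n : ℕ in atTop, ∃ F : Finset ℕ, (∀ k ∈ F, k ∈ E ∧ k ≤ n) ∧ δ * (n + 1) ≤ F.card) :
    δ ≤ lowerDensity E := by
  refine le_liminf_of_le (isCoboundedUnder_ge_indicator_average E) ?_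
  filter_upwards [h] with n ⟨F, hF, hcard⟩
  rw [le_div_iff₀ (by positivity)]
  calc δ * (n + 1) ≤ F.card := hcard
    _ = ∑ k ∈ F, E.indicator (fun _ => (1 : ℝ)) k := by
      rw [Finset.sum_congr rfl fun k hk => Set.indicator_of_mem (hF k hk).1 _]
      simp
    _ ≤ ∑ k ∈ Finset.range (n + 1), E.indicator (fun _ => (1 : ℝ)) k :=
      Finset.sum_le_sum_of_subset_of_nonneg
        (fun k hk => Finset.mem_range_succ_iff.2 (hF k hk).2)
        (fun _ _ _ => Set.indicator_nonneg (fun _ _ => zero_le_one) _)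

theorem mem_FHC_of_isTopologicalBasis {X : Type*} [NormedAddCommGroup X] [NormedSpace ℝ X]
    {T : X →L[ℝ] X} {x : X} {B : Set (Set X)} (hB : TopologicalSpace.IsTopologicalBasis B)
    (h : ∀ V ∈ B, V.Nonempty → 0 < lowerDensity {n : ℕ | (T ^ n) x ∈ V}) : x ∈ FHC T := by
  rintro U hU ⟨p, hp⟩
  obtain ⟨V, hVB, hpV, hVU⟩ := hB.exists_subset_of_mem_open hp hU
  exact (h V hVB ⟨p, hpV⟩).trans_le (lowerDensity_mono fun _ hn => hVU hn)

end LowerDensity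

section SeparatedFamily

/-- The multiples of `c ^ s` in the intervals `[c ^ e, 2 * c ^ e)` whose exponent `e > s` has
2-adic valuation `κ`; the exponent is recovered as `e = Nat.log c n`. These are the building blocks
of separated families: the valuation makes blocks with different `κ` disjoint, while the exponents
of a fixed valuation still have bounded gaps. -/
def lacunaryBlock (c κ s : ℕ) : Set ℕ :=
  {n | c ^ s ∣ n ∧ s < Nat.log c n ∧ padicValNat 2 (Nat.log c n) = κ ∧ n < 2 * c ^ Nat.log c n}

variable {c κ s m n : ℕ}

theorem pow_le_of_mem_lacunaryBlock (hn : n ∈ lacunaryBlock c κ s) : c ^ s ≤ n := by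
  obtain ⟨hdvd, hs, -, -⟩ := hn
  refine Nat.le_of_dvd (Nat.pos_of_ne_zero ?_) hdvd
  rintro rfl
  simp at hs

theorem pow_le_dist_of_mem_lacunaryBlock (hm : m ∈ lacunaryBlock c κ s)
    (hn : n ∈ lacunaryBlock c κ s) (hmn : m ≠ n) : c ^ s ≤ Nat.dist m n := by
  refine Nat.le_of_dvd (Nat.dist_pos_of_ne hmn) ?_
  rcases le_total m n with h | h
  · rw [Nat.dist_eq_sub_of_le h]; exact Nat.dvd_sub hn.1 hm.1
  · rw [Nat.dist_eq_sub_of_le_right h]; exact Nat.dvd_sub hm.1 hn.1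

theorem mul_le_of_log_lt_log {d : ℕ} (hc : 2 * d ≤ c) (hm : m < 2 * c ^ Nat.log c m)
    (hlog : Nat.log c m < Nat.log c n) : d * m ≤ n := by
  have hn : n ≠ 0 := by rintro rfl; simp at hlog
  calc d * m ≤ d * (2 * c ^ Nat.log c m) := by gcongr
    _ = 2 * d * c ^ Nat.log c m := by ring
    _ ≤ c * c ^ Nat.log c m := by gcongr
    _ = c ^ (Nat.log c m + 1) := (pow_succ' _ _).symm
    _ ≤ n := Nat.pow_le_of_le_log hn hlog

theorem add_pow_le_of_log_lt_log (hc : 3 ≤ c) (hm : m < 2 * c ^ Nat.log c m)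
    (hlog : Nat.log c m < Nat.log c n) (hs : s < Nat.log c n) : m + c ^ s ≤ n := by
  have hn : n ≠ 0 := by rintro rfl; simp at hlog
  obtain ⟨e, he⟩ := Nat.exists_eq_add_one_of_ne_zero (Nat.ne_zero_of_lt hlog)
  have hm' : c ^ Nat.log c m ≤ c ^ e := Nat.pow_le_pow_right (by lia) (by lia)
  have hs' : c ^ s ≤ c ^ e := Nat.pow_le_pow_right (by lia) (by lia)
  calc m + c ^ s ≤ 3 * c ^ e := by lia
    _ ≤ c * c ^ e := by gcongr
    _ = c ^ Nat.log c n := by rw [he, pow_succ']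
    _ ≤ n := Nat.pow_log_le_self c hn

theorem exists_padicValNat_two_eq {k : ℕ} (hk : 2 ^ κ < k) :
    ∃ e, padicValNat 2 e = κ ∧ e < k ∧ k ≤ e + 2 ^ (κ + 1) := by
  set q := (k - 1 - 2 ^ κ) / 2 ^ (κ + 1)
  have hdiv := Nat.div_add_mod (k - 1 - 2 ^ κ) (2 ^ (κ + 1))
  have hmod := Nat.mod_lt (k - 1 - 2 ^ κ) (show 0 < 2 ^ (κ + 1) by positivity)
  have he : 2 ^ κ * (2 * q + 1) = 2 ^ (κ + 1) * q + 2 ^ κ := by ring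
  refine ⟨2 ^ κ * (2 * q + 1), ?_, by lia, by lia⟩
  rw [padicValNat.mul (by positivity) (by positivity), padicValNat.prime_pow,
    padicValNat.eq_zero_of_not_dvd (by lia), add_zero]

theorem log_pow_add {e r : ℕ} (hc : 2 ≤ c) (hr : r < c ^ e) : Nat.log c (c ^ e + r) = e := by
  refine Nat.log_eq_of_pow_le_of_lt_pow (Nat.le_add_right _ _) ?_
  calc c ^ e + r < 2 * c ^ e := by lia
    _ ≤ c ^ (e + 1) := by rw [pow_succ']; gcongr

theorem mul_pow_lt_pow {e t : ℕ} (hc : 0 < c) (hse : s ≤ e) (ht : t < c ^ (e - s)) :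
    t * c ^ s < c ^ e :=
  calc t * c ^ s < c ^ (e - s) * c ^ s := Nat.mul_lt_mul_of_pos_right ht (by positivity)
    _ = c ^ e := by rw [← pow_add, Nat.sub_add_cancel hse]

theorem pow_add_mul_pow_mem_lacunaryBlock {e t : ℕ} (hc : 2 ≤ c) (he : padicValNat 2 e = κ)
    (hse : s < e) (ht : t < c ^ (e - s)) : c ^ e + t * c ^ s ∈ lacunaryBlock c κ s := by
  have hlt : t * c ^ s < c ^ e := mul_pow_lt_pow (by lia) hse.le ht
  have hlog : Nat.log c (c ^ e + t * c ^ s) = e := log_pow_add hc hlt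
  refine ⟨(pow_dvd_pow c hse.le).add (dvd_mul_left _ _), by rwa [hlog], by rwa [hlog], ?_⟩
  rw [hlog]
  lia

theorem lowerDensity_lacunaryBlock_pos (hc : 2 ≤ c) (κ s : ℕ) :
    0 < lowerDensity (lacunaryBlock c κ s) := by
  have hcpos : 0 < c := by lia
  suffices h : 1 / (c : ℝ) ^ (s + 2 ^ (κ + 1) + 1) ≤ lowerDensity (lacunaryBlock c κ s) from
    lt_of_lt_of_le (by positivity) h
  refine le_lowerDensity_of_eventually_card ?_
  filter_upwards [eventually_ge_atTop (c ^ (s + 2 ^ (κ + 1) + 1))] with n hn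
  have hk : s + 2 ^ (κ + 1) + 1 ≤ Nat.log c n := Nat.le_log_of_pow_le hc hn
  obtain ⟨e, heκ, hek, hke⟩ := exists_padicValNat_two_eq (κ := κ) (k := Nat.log c n)
    (by rw [pow_succ] at hk; lia)
  have hse : s < e := by lia
  have hinj : Function.Injective fun t : ℕ => c ^ e + t * c ^ s := fun a b hab =>
    Nat.eq_of_mul_eq_mul_right (by positivity) (Nat.add_left_cancel hab)
  refine ⟨(Finset.range (c ^ (e - s))).image fun t => c ^ e + t * c ^ s, ?_, ?_⟩
  · simp only [Finset.forall_mem_image, Finset.mem_range]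
    intro t ht
    have hmem := pow_add_mul_pow_mem_lacunaryBlock hc heκ hse ht
    have hlog := log_pow_add hc (mul_pow_lt_pow hcpos hse.le ht)
    refine ⟨hmem, ?_⟩
    simpa using mul_le_of_log_lt_log (d := 1) hc hmem.2.2.2 (hlog.trans_lt hek)
  · rw [Finset.card_image_of_injective _ hinj, Finset.card_range, div_mul_eq_mul_div, one_mul,
      div_le_iff₀ (by positivity)]
    have : n + 1 ≤ c ^ (e - s) * c ^ (s + 2 ^ (κ + 1) + 1) := by
      rw [← pow_add]
      exact (Nat.lt_pow_succ_log_self hc n).trans_le (Nat.pow_le_pow_right hcpos (by lia))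
    exact_mod_cast this

variable {ι : Type*}

/-- Pairwise disjoint sets of integers whose points lie at distance at least `g i` from `0` and from
all other points of the family, where points `m`, `n` of different members moreover satisfy
`d * min m n ≤ |m - n|`. The gaps control sums of geometric decay, and the last condition lets this
decay beat the powers `(λ / λ') ^ min m n` produced by two different multiples of an operator. -/
structure IsSeparatedFamily (d : ℕ) (g : ι → ℕ) (A : ι → Set ℕ) : Prop where
  pairwise_disjoint : Pairwise (Function.onFun Disjoint A)
  gap_le : ∀ i, ∀ n ∈ A i, g i ≤ n
  gap_le_dist : ∀ i j, ∀ m ∈ A i, ∀ n ∈ A j, m ≠ n → g i ≤ Nat.dist m n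
  mul_min_le_dist : ∀ i j, i ≠ j → ∀ m ∈ A i, ∀ n ∈ A j, d * min m n ≤ Nat.dist m n

theorem IsSeparatedFamily.injective_val {d : ℕ} {g : ι → ℕ} {A : ι → Set ℕ}
    (hA : IsSeparatedFamily d g A) : Function.Injective fun p : Σ i, A i => (p.2 : ℕ) :=
  Subtype.val_injective.comp (Set.sigmaToiUnion_injective A hA.pairwise_disjoint)

theorem isSeparatedFamily_lacunaryBlock {κ : ι → ℕ} (hκ : Function.Injective κ) (d : ℕ)
    (g : ι → ℕ) : IsSeparatedFamily d g fun i => lacunaryBlock (2 * d + 3) (κ i) (g i) := by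
  have hg : ∀ i, g i ≤ (2 * d + 3) ^ g i := fun i => (Nat.lt_pow_self (by lia)).le
  have hlog : ∀ {i j m n}, i ≠ j → m ∈ lacunaryBlock (2 * d + 3) (κ i) (g i) →
      n ∈ lacunaryBlock (2 * d + 3) (κ j) (g j) →
      Nat.log (2 * d + 3) m ≠ Nat.log (2 * d + 3) n := by
    rintro i j m n hij ⟨-, -, hm, -⟩ ⟨-, -, hn, -⟩ h
    exact hij (hκ (by rw [← hm, ← hn, h]))
  refine ⟨fun i j hij => ?_, fun i n hn => (hg i).trans (pow_le_of_mem_lacunaryBlock hn),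
    fun i j m hm n hn hmn => (hg i).trans ?_, fun i j hij m hm n hn => ?_⟩
  · exact Set.disjoint_left.2 fun n hi hj => hlog hij hi hj rfl
  · by_cases hij : i = j
    · subst hij
      exact pow_le_dist_of_mem_lacunaryBlock hm hn hmn
    · unfold Nat.dist
      rcases (hlog hij hm hn).lt_or_gt with h | h
      · have := add_pow_le_of_log_lt_log (by lia) hm.2.2.2 h (hm.2.1.trans h)
        lia
      · have := add_pow_le_of_log_lt_log (by lia) hn.2.2.2 h hm.2.1
        lia
  · unfold Nat.dist
    rcases (hlog hij hm hn).lt_or_gt with h | h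
    · have := mul_le_of_log_lt_log (d := d + 1) (by lia) hm.2.2.2 h
      rw [min_eq_left (by nlinarith)]
      lia
    · have := mul_le_of_log_lt_log (d := d + 1) (by lia) hn.2.2.2 h
      rw [min_eq_right (by nlinarith)]
      lia

theorem exists_isSeparatedFamily [Countable ι] (d : ℕ) (g : ι → ℕ) :
    ∃ A : ι → Set ℕ, IsSeparatedFamily d g A ∧ ∀ i, 0 < lowerDensity (A i) := by
  obtain ⟨κ, hκ⟩ := Countable.exists_injective_nat ι
  exact ⟨_, isSeparatedFamily_lacunaryBlock hκ d g,
    fun i => lowerDensity_lacunaryBlock_pos (by lia) (κ i) (g i)⟩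

end SeparatedFamily

section GeometricDecay

theorem exists_pow_eq_of_mem_Ico {ρ : ℝ} (hρ : ρ ∈ Set.Ico 0 1) {k : ℕ} (hk : k ≠ 0) :
    ∃ w ∈ Set.Ico (0 : ℝ) 1, w ^ k = ρ :=
  ⟨ρ ^ (k⁻¹ : ℝ), ⟨Real.rpow_nonneg hρ.1 _, Real.rpow_lt_one hρ.1 hρ.2 (by positivity)⟩,
    Real.rpow_inv_natCast_pow hρ.1 hk⟩

theorem eventually_mul_pow_le {w ε : ℝ} (hw : w ∈ Set.Ico 0 1) (hε : 0 < ε) (K : ℝ) :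
    ∀ᶠ n : ℕ in atTop, K * w ^ n ≤ ε := by
  have h : Tendsto (fun n : ℕ => K * w ^ n) atTop (𝓝 0) := by
    simpa using (tendsto_pow_atTop_nhds_zero_of_lt_one hw.1 hw.2).const_mul K
  exact h.eventually_le_const hε

theorem exists_forall_ge_mul_cube_pow_le {w ε : ℝ} (hw : w ∈ Set.Ico 0 1) (hε : 0 < ε) (K : ℝ) :
    ∃ g : ℕ, ∀ n ≥ g, K * (w ^ 3) ^ n ≤ w ^ n * w ^ n ∧ w ^ n ≤ ε := by
  obtain ⟨g, hg⟩ := eventually_atTop.1 <|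
    (eventually_mul_pow_le hw one_pos K).and (eventually_mul_pow_le hw hε 1)
  refine ⟨g, fun n hn => ⟨?_, by simpa using (hg n hn).2⟩⟩
  calc K * (w ^ 3) ^ n = K * w ^ n * (w ^ n * w ^ n) := by ring
    _ ≤ w ^ n * w ^ n := mul_le_of_le_one_left (mul_self_nonneg _) (hg n hn).1

theorem exists_nat_div_pow_mul_pow_le_one {α : ℝ} (hα : 0 < α) (β : ℝ) {w : ℝ}
    (hw : w ∈ Set.Ico 0 1) :
    ∃ d : ℕ, ∀ l ∈ Set.Icc α β, ∀ l' ∈ Set.Icc α β, ∀ p k : ℕ, (l = l' ∨ d * p ≤ k) →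
      (l / l') ^ p * w ^ k ≤ 1 := by
  obtain ⟨hw0, hw1⟩ := hw
  obtain ⟨d, hd⟩ := (eventually_mul_pow_le ⟨hw0, hw1⟩ one_pos (β / α)).exists
  refine ⟨d, fun l hl l' hl' p k h => ?_⟩
  have hl0 : 0 < l := hα.trans_le hl.1
  have hl'0 : 0 < l' := hα.trans_le hl'.1
  have hβ0 : 0 < β := hl0.trans_le hl.2
  rcases h with rfl | hpk
  · rw [div_self hl0.ne', one_pow, one_mul]
    exact pow_le_one₀ hw0 hw1.le
  · calc (l / l') ^ p * w ^ k ≤ (β / α) ^ p * w ^ (d * p) :=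
        mul_le_mul (pow_le_pow_left₀ (by positivity) (div_le_div₀ hβ0.le hl.2 hα hl'.1) p)
          (pow_le_pow_of_le_one hw0 hw1.le hpk) (by positivity) (by positivity)
      _ = (β / α * w ^ d) ^ p := by rw [pow_mul, mul_pow]
      _ ≤ 1 := pow_le_one₀ (by positivity) hd

theorem summable_pow_natAbs {w : ℝ} (hw : w ∈ Set.Ico 0 1) :
    Summable fun k : ℤ => w ^ k.natAbs := by
  refine Summable.of_nat_of_neg ?_ ?_ <;>
    simpa using summable_geometric_of_lt_one hw.1 hw.2

theorem pow_dist_eq_pow_natAbs (w : ℝ) (m n : ℕ) :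
    w ^ Nat.dist m n = w ^ ((n : ℤ) - m).natAbs := by
  congr 1
  unfold Nat.dist
  lia

theorem summable_pow_dist {ι : Type*} {w : ℝ} (hw : w ∈ Set.Ico 0 1) {f : ι → ℕ}
    (hf : Function.Injective f) (m : ℕ) : Summable fun i => w ^ Nat.dist m (f i) := by
  simp only [pow_dist_eq_pow_natAbs]
  exact (summable_pow_natAbs hw).comp_injective
    (sub_left_injective.comp (Nat.cast_injective.comp hf))

theorem tsum_pow_dist_le {ι : Type*} {w : ℝ} (hw : w ∈ Set.Ico 0 1) {f : ι → ℕ}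
    (hf : Function.Injective f) (m : ℕ) :
    ∑' i, w ^ Nat.dist m (f i) ≤ ∑' k : ℤ, w ^ k.natAbs := by
  refine (summable_pow_dist hw hf m).tsum_le_tsum_of_inj (fun i => (f i : ℤ) - m)
    (sub_left_injective.comp (Nat.cast_injective.comp hf))
    (fun _ _ => pow_nonneg hw.1 _) (fun i => (pow_dist_eq_pow_natAbs w m (f i)).le)
    (summable_pow_natAbs hw)

theorem norm_tsum_sub_apply_le {ι E : Type*} [NormedAddCommGroup E] {f : ι → E} (hf : Summable f)
    {b : ι → ℝ} (hb : Summable b) {i₀ : ι} (hb₀ : 0 ≤ b i₀) (hfb : ∀ i ≠ i₀, ‖f i‖ ≤ b i) :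
    ‖∑' i, f i - f i₀‖ ≤ ∑' i, b i := by
  classical
  rw [hf.tsum_eq_add_tsum_ite i₀, add_sub_cancel_left]
  refine tsum_of_norm_bounded hb.hasSum fun i => ?_
  split_ifs with hi
  · simpa [hi] using hb₀
  · exact hfb i hi

theorem norm_tsum_sub_apply_le_of_pow_dist {ι E : Type*} [NormedAddCommGroup E] {w η : ℝ}
    (hw : w ∈ Set.Ico 0 1) (hη : 0 ≤ η) {ν : ι → ℕ} (hν : Function.Injective ν) {f : ι → E}
    (hf : Summable f) {i₀ : ι} (hfη : ∀ i ≠ i₀, ‖f i‖ ≤ η * w ^ Nat.dist (ν i₀) (ν i)) :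
    ‖∑' i, f i - f i₀‖ ≤ η * ∑' k : ℤ, w ^ k.natAbs :=
  calc ‖∑' i, f i - f i₀‖ ≤ ∑' i, η * w ^ Nat.dist (ν i₀) (ν i) :=
        norm_tsum_sub_apply_le hf ((summable_pow_dist hw hν _).mul_left _)
          (mul_nonneg hη (pow_nonneg hw.1 _)) hfη
    _ = η * ∑' i, w ^ Nat.dist (ν i₀) (ν i) := tsum_mul_left
    _ ≤ η * ∑' k : ℤ, w ^ k.natAbs := mul_le_mul_of_nonneg_left (tsum_pow_dist_le hw hν _) hη

theorem exists_forall_le_mul_pow_of_limsup_rpow_lt {u : ℕ → ℝ≥0} {ρ : ℝ≥0}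
    (h : limsup (fun n : ℕ => (u n : ℝ≥0∞) ^ (1 / (n : ℝ))) atTop < ρ) :
    ∃ C : ℝ, ∀ n, (u n : ℝ) ≤ C * ρ ^ n := by
  have hρ : 0 < ρ := by exact_mod_cast (zero_le).trans_lt h
  have hle : ∀ᶠ n in atTop, u n ≤ ρ ^ n := by
    filter_upwards [eventually_lt_of_limsup_lt h, eventually_gt_atTop 0] with n hn hn0
    rw [one_div] at hn
    have := (ENNReal.rpow_inv_le_iff (by positivity)).1 hn.le
    exact_mod_cast this
  have hO : (fun n => (u n : ℝ)) =O[atTop] fun n => (ρ : ℝ) ^ n := by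
    refine Asymptotics.IsBigO.of_bound 1 (hle.mono fun n hn => ?_)
    simpa using (by exact_mod_cast hn : (u n : ℝ) ≤ ρ ^ n)
  obtain ⟨C, -, hC⟩ := Asymptotics.bound_of_isBigO_nat_atTop hO
  exact ⟨C, fun n => by simpa using hC (x := n) (by positivity)⟩

end GeometricDecay

section Criterion

variable {ι 𝕜 X Y : Type*} [Countable ι] [NormedField 𝕜] [NormedAddCommGroup X] [NormedSpace 𝕜 X]
  [CompleteSpace X] [NormedAddCommGroup Y] [NormedSpace 𝕜 Y]

-- Of the three factors of `ρ = w ^ 3`, one absorbs the constants `C j`, one gives the tolerance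
-- `ε i`, and one makes the sum over the family converge.
theorem exists_forall_lowerDensity_norm_sub_le_pos {L : ι → ℕ → X →L[𝕜] Y} {u : ι → ℕ → X}
    {y : ι → Y} {C ε : ι → ℝ} {ρ : ℝ} {d : ℕ} (hρ : ρ ∈ Set.Ico 0 1) (hε : ∀ i, 0 < ε i)
    (hu : ∀ i n, ‖u i n‖ ≤ C i * ρ ^ n) (hLu : ∀ i m, L i m (u i m) = y i)
    (hL : ∀ i j m n, i = j ∨ d * min m n ≤ Nat.dist m n →
      ‖L i m (u j n)‖ ≤ C j * ρ ^ Nat.dist m n) :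
    ∃ x : X, ∀ i, 0 < lowerDensity {m | ‖L i m x - y i‖ ≤ ε i} := by
  obtain ⟨w, hw, rfl⟩ := exists_pow_eq_of_mem_Ico hρ three_ne_zero
  set B : ℝ := ∑' k : ℤ, w ^ k.natAbs
  have hw0 : ∀ k : ℕ, 0 ≤ w ^ k := pow_nonneg hw.1
  have hB : 0 < B := (summable_pow_natAbs hw).tsum_pos (fun k => hw0 _) 0 (by simp)
  have hεB : ∀ i, 0 < ε i / B := fun i => div_pos (hε i) hB
  choose g hg using fun i => exists_forall_ge_mul_cube_pow_le hw (hεB i) (C i)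
  obtain ⟨A, hA, hApos⟩ := exists_isSeparatedFamily d g
  have hsum : Summable fun p : Σ i, A i => u p.1 p.2 := by
    refine Summable.of_norm_bounded (summable_pow_dist hw hA.injective_val 0) fun ⟨i, n, hn⟩ => ?_
    rw [Nat.dist_zero_left]
    exact (hu i n).trans ((hg i n (hA.gap_le i n hn)).1.trans
      (mul_le_of_le_one_left (hw0 n) (pow_le_one₀ hw.1 hw.2.le)))
  refine ⟨∑' p : Σ i, A i, u p.1 p.2, fun i =>
    (hApos i).trans_le (lowerDensity_mono fun m hm => ?_)⟩
  have hoff : ∀ p : Σ i, A i, p ≠ ⟨i, m, hm⟩ →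
      ‖L i m (u p.1 p.2)‖ ≤ ε i / B * w ^ Nat.dist m p.2 := by
    rintro ⟨j, n, hn⟩ hp
    have hmn : m ≠ n := fun h => hp (hA.injective_val h.symm)
    have hsep : i = j ∨ d * min m n ≤ Nat.dist m n :=
      or_iff_not_imp_left.2 fun hij => hA.mul_min_le_dist i j hij m hm n hn
    have hgi : g i ≤ Nat.dist m n := hA.gap_le_dist i j m hm n hn hmn
    have hgj : g j ≤ Nat.dist m n := by
      rw [Nat.dist_comm]
      exact hA.gap_le_dist j i n hn m hm hmn.symm
    calc ‖L i m (u j n)‖ ≤ C j * (w ^ 3) ^ Nat.dist m n := hL i j m n hsep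
      _ ≤ w ^ Nat.dist m n * w ^ Nat.dist m n := (hg j _ hgj).1
      _ ≤ ε i / B * w ^ Nat.dist m n := mul_le_mul_of_nonneg_right (hg i _ hgi).2 (hw0 _)
  calc ‖L i m (∑' p : Σ i, A i, u p.1 p.2) - y i‖
      = ‖∑' p : Σ i, A i, L i m (u p.1 p.2) - L i m (u i m)‖ := by
        rw [(L i m).map_tsum hsum, hLu]
    _ ≤ ε i / B * B :=
        norm_tsum_sub_apply_le_of_pow_dist hw (hεB i).le hA.injective_val
          (hsum.map (L i m) (L i m).continuous) (i₀ := ⟨i, m, hm⟩) hoff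
    _ = ε i := div_mul_cancel₀ _ hB.ne'

end Criterion

theorem exists_forall_closedBall_subset_of_dense {ι X : Type*} [PseudoMetricSpace X] {s : Set X}
    (hs : Dense s) {U : ι → Set X} (hU : ∀ i, IsOpen (U i)) (hne : ∀ i, (U i).Nonempty) :
    ∃ (z : ι → s) (ε : ι → ℝ), ∀ i, 0 < ε i ∧ Metric.closedBall (z i : X) (ε i) ⊆ U i := by
  have h : ∀ i, ∃ (z : s) (ε : ℝ), 0 < ε ∧ Metric.closedBall (z : X) ε ⊆ U i := fun i => by
    obtain ⟨z, hz, hzs⟩ := hs.inter_open_nonempty (U i) (hU i) (hne i)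
    obtain ⟨ε, hε, hball⟩ := Metric.nhds_basis_closedBall.mem_iff.1 ((hU i).mem_nhds hz)
    exact ⟨⟨z, hzs⟩, ε, hε, hball⟩
  choose z ε h using h
  exact ⟨z, ε, h⟩

section RightInverse

theorem iterate_apply_iterate_add {X : Type*} {T : X → X} {X₀ : Set X} {S : X₀ → X₀}
    (hTS : ∀ x : X₀, T (S x) = x) (m k : ℕ) (x : X₀) :
    T^[m] (S^[m + k] x : X₀) = (S^[k] x : X₀) := by
  induction m with
  | zero => simp
  | succ m ih =>
    rw [Function.iterate_succ_apply, Nat.succ_add, Function.iterate_succ_apply', hTS, ih]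

variable {X : Type*} [NormedAddCommGroup X] {X₀ : Set X} {S : X₀ → X₀}

section Field

variable {𝕜 : Type*} [NormedField 𝕜] [NormedSpace 𝕜 X] {T : X →L[𝕜] X}

theorem smul_pow_apply_inv_pow_smul_iterate_add (hTS : ∀ x : X₀, T (S x) = x) (l l' : 𝕜)
    (m k : ℕ) (x : X₀) :
    ((l • T) ^ m) (l'⁻¹ ^ (m + k) • (S^[m + k] x : X₀)) =
      (l / l') ^ m • l'⁻¹ ^ k • ((S^[k] x : X₀) : X) := by
  rw [smul_pow, smul_apply, map_smul, FunLike.coe_pow_eq_iterate, iterate_apply_iterate_add hTS,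
    smul_smul, smul_smul, pow_add, div_eq_mul_inv, mul_pow, mul_assoc]

theorem smul_pow_apply_inv_pow_smul_iterate (hTS : ∀ x : X₀, T (S x) = x) (l l' : 𝕜) (n : ℕ)
    (x : X₀) : ((l • T) ^ n) (l'⁻¹ ^ n • (S^[n] x : X₀)) = (l / l') ^ n • (x : X) := by
  simpa using smul_pow_apply_inv_pow_smul_iterate_add hTS l l' n 0 x

theorem smul_pow_apply_inv_pow_smul_iterate_self (hTS : ∀ x : X₀, T (S x) = x) {l : 𝕜} (hl : l ≠ 0)
    (n : ℕ) (x : X₀) : ((l • T) ^ n) (l⁻¹ ^ n • (S^[n] x : X₀)) = x := by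
  rw [smul_pow_apply_inv_pow_smul_iterate hTS, div_self hl, one_pow, one_smul]

theorem smul_pow_add_apply_inv_pow_smul_iterate (hTS : ∀ x : X₀, T (S x) = x) (l l' : 𝕜)
    (n k : ℕ) (x : X₀) :
    ((l • T) ^ (n + k)) (l'⁻¹ ^ n • (S^[n] x : X₀)) = (l / l') ^ n • ((l • T) ^ k) x := by
  rw [add_comm, pow_add, mul_apply_eq_comp, smul_pow_apply_inv_pow_smul_iterate hTS, map_smul]

end Field

variable [NormedSpace ℝ X] {T : X →L[ℝ] X}

theorem norm_smul_pow_apply_le (hTS : ∀ x : X₀, T (S x) = x) {l l' : ℝ} (hl : 0 ≤ l)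
    (hl' : 0 ≤ l') {x : X₀} {b : ℕ → ℝ} (hS : ∀ k, ‖l'⁻¹ ^ k • ((S^[k] x : X₀) : X)‖ ≤ b k)
    (hT : ∀ k, ‖((l • T) ^ k) x‖ ≤ b k) (m n : ℕ) :
    ‖((l • T) ^ m) (l'⁻¹ ^ n • (S^[n] x : X₀))‖ ≤ (l / l') ^ min m n * b (Nat.dist m n) := by
  have hpow : ∀ p : ℕ, ‖(l / l') ^ p‖ = (l / l') ^ p := fun p =>
    Real.norm_of_nonneg (by positivity)
  rcases le_total m n with h | h <;> obtain ⟨k, rfl⟩ := Nat.exists_eq_add_of_le h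
  · rw [smul_pow_apply_inv_pow_smul_iterate_add hTS, norm_smul, hpow, min_eq_left h,
      Nat.dist_eq_sub_of_le h, Nat.add_sub_cancel_left]
    gcongr
    exact hS k
  · rw [smul_pow_add_apply_inv_pow_smul_iterate hTS, norm_smul, hpow, min_eq_right h,
      Nat.dist_eq_sub_of_le_right h, Nat.add_sub_cancel_left]
    gcongr
    exact hT k

theorem exists_norm_inv_pow_smul_iterate_le {α : ℝ} (hα : aT X₀ S < ENNReal.ofReal α) :
    ∃ ρ ∈ Set.Ico (0 : ℝ) 1, ∀ x : X₀, ∃ C, ∀ l, α ≤ l → ∀ n,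
      ‖l⁻¹ ^ n • ((S^[n] x : X₀) : X)‖ ≤ C * ρ ^ n := by
  have hα0 : 0 < α := ENNReal.ofReal_pos.1 ((zero_le).trans_lt hα)
  obtain ⟨r, har, hrα⟩ := ENNReal.lt_iff_exists_nnreal_btwn.1 hα
  rw [← ENNReal.ofReal_coe_nnreal, ENNReal.ofReal_lt_ofReal_iff hα0] at hrα
  refine ⟨r / α, ⟨by positivity, (div_lt_one hα0).2 hrα⟩, fun x => ?_⟩
  obtain ⟨C, hC⟩ := exists_forall_le_mul_pow_of_limsup_rpow_lt
    (u := fun n => ‖((S^[n] x : X₀) : X)‖₊) ((le_iSup_iff.2 fun _ h => h x).trans_lt har)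
  refine ⟨C, fun l hl n => ?_⟩
  have hl0 : 0 < l := hα0.trans_le hl
  calc ‖l⁻¹ ^ n • ((S^[n] x : X₀) : X)‖ = l⁻¹ ^ n * ‖((S^[n] x : X₀) : X)‖ := by
        rw [norm_smul, Real.norm_of_nonneg (by positivity)]
    _ ≤ α⁻¹ ^ n * (C * r ^ n) := by gcongr; exact hC n
    _ = C * (r / α) ^ n := by rw [div_eq_mul_inv, mul_pow]; ring

theorem exists_norm_smul_pow_apply_le {β : ℝ} (hβ0 : 0 ≤ β) (hβ : ENNReal.ofReal β < bT T X₀) :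
    ∃ ρ ∈ Set.Ico (0 : ℝ) 1, ∀ x : X₀, ∃ C, ∀ l, 0 ≤ l → l ≤ β → ∀ n,
      ‖((l • T) ^ n) (x : X)‖ ≤ C * ρ ^ n := by
  obtain ⟨r, hβr, hrb⟩ := ENNReal.lt_iff_exists_nnreal_btwn.1 hβ
  rw [← ENNReal.ofReal_coe_nnreal, ENNReal.ofReal_lt_ofReal_iff_of_nonneg hβ0] at hβr
  have hr0 : 0 < (r : ℝ) := hβ0.trans_lt hβr
  refine ⟨β / r, ⟨by positivity, (div_lt_one hr0).2 hβr⟩, fun x => ?_⟩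
  obtain ⟨C, hC⟩ := exists_forall_le_mul_pow_of_limsup_rpow_lt
    (u := fun n => ‖(T ^ n) (x : X)‖₊) (ρ := r⁻¹) (by
      rw [ENNReal.coe_inv (by exact_mod_cast hr0.ne'), ← ENNReal.inv_lt_inv, inv_inv]
      exact hrb.trans_le (iInf_le_iff.2 fun _ h => h x))
  refine ⟨C, fun l hl0 hl n => ?_⟩
  calc ‖((l • T) ^ n) (x : X)‖ = l ^ n * ‖(T ^ n) (x : X)‖ := by
        rw [smul_pow, smul_apply, norm_smul, Real.norm_of_nonneg (by positivity)]
    _ ≤ β ^ n * (C * (r : ℝ)⁻¹ ^ n) := by gcongr; exact_mod_cast hC n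
    _ = C * (β / r) ^ n := by rw [div_eq_mul_inv, mul_pow]; ring

theorem exists_uniform_geometric_bound {α β : ℝ} (hαβ : α ≤ β)
    (hα : aT X₀ S < ENNReal.ofReal α) (hβ : ENNReal.ofReal β < bT T X₀) :
    ∃ ρ ∈ Set.Ico (0 : ℝ) 1, ∃ C : X₀ → ℝ, (∀ x, 0 ≤ C x) ∧ ∀ x, ∀ l ∈ Set.Icc α β, ∀ n,
      ‖l⁻¹ ^ n • ((S^[n] x : X₀) : X)‖ ≤ C x * ρ ^ n ∧
        ‖((l • T) ^ n) (x : X)‖ ≤ C x * ρ ^ n := by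
  have hα0 : 0 < α := ENNReal.ofReal_pos.1 ((zero_le).trans_lt hα)
  obtain ⟨r, hr, hS⟩ := exists_norm_inv_pow_smul_iterate_le hα
  obtain ⟨q, hq, hT⟩ := exists_norm_smul_pow_apply_le (hα0.le.trans hαβ) hβ
  choose C hC using hS
  choose D hD using hT
  have hC0 : ∀ x, 0 ≤ max (C x) (D x) := fun x =>
    le_max_of_le_left ((norm_nonneg _).trans (by simpa using hC x α le_rfl 0))
  refine ⟨max r q, ⟨le_max_of_le_left hr.1, max_lt hr.2 hq.2⟩, fun x => max (C x) (D x), hC0,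
    fun x l hl n => ⟨(hC x l hl.1 n).trans ?_, (hD x l (hα0.le.trans hl.1) hl.2 n).trans ?_⟩⟩
  · exact mul_le_mul (le_max_left _ _) (pow_le_pow_left₀ hr.1 (le_max_left _ _) n)
      (pow_nonneg hr.1 n) (hC0 x)
  · exact mul_le_mul (le_max_right _ _) (pow_le_pow_left₀ hq.1 (le_max_right _ _) n)
      (pow_nonneg hq.1 n) (hC0 x)

theorem exists_norm_smul_pow_apply_inv_pow_smul_iterate_le (hTS : ∀ x : X₀, T (S x) = x)
    {α β : ℝ} (hαβ : α ≤ β) (hα : aT X₀ S < ENNReal.ofReal α) (hβ : ENNReal.ofReal β < bT T X₀) :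
    ∃ ρ ∈ Set.Ico (0 : ℝ) 1, ∃ (C : X₀ → ℝ) (d : ℕ), ∀ x, ∀ l ∈ Set.Icc α β, ∀ l' ∈ Set.Icc α β,
      ∀ m n, l = l' ∨ d * min m n ≤ Nat.dist m n →
        ‖((l • T) ^ m) (l'⁻¹ ^ n • (S^[n] x : X₀))‖ ≤ C x * ρ ^ Nat.dist m n := by
  have hα0 : 0 < α := ENNReal.ofReal_pos.1 ((zero_le).trans_lt hα)
  obtain ⟨_, hρ, C, hC0, hC⟩ := exists_uniform_geometric_bound hαβ hα hβ
  obtain ⟨w, hw, rfl⟩ := exists_pow_eq_of_mem_Ico hρ two_ne_zero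
  obtain ⟨d, hd⟩ := exists_nat_div_pow_mul_pow_le_one hα0 β hw
  refine ⟨w, hw, C, d, fun x l hl l' hl' m n h => ?_⟩
  have hw0 : 0 ≤ w ^ Nat.dist m n := pow_nonneg hw.1 _
  calc ‖((l • T) ^ m) (l'⁻¹ ^ n • (S^[n] x : X₀))‖
      ≤ (l / l') ^ min m n * (C x * (w ^ 2) ^ Nat.dist m n) :=
        norm_smul_pow_apply_le hTS (hα0.le.trans hl.1) (hα0.le.trans hl'.1)
          (fun k => (hC x l' hl' k).1) (fun k => (hC x l hl k).2) m n
    _ = (l / l') ^ min m n * w ^ Nat.dist m n * (C x * w ^ Nat.dist m n) := by ring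
    _ ≤ C x * w ^ Nat.dist m n :=
        mul_le_of_le_one_left (mul_nonneg (hC0 x) hw0) (hd l hl l' hl' _ _ h)

theorem exists_forall_lowerDensity_norm_smul_pow_sub_le_pos {ι : Type*} [Countable ι]
    [CompleteSpace X] (hTS : ∀ x : X₀, T (S x) = x) {α β : ℝ} (hαβ : α ≤ β)
    (hα : aT X₀ S < ENNReal.ofReal α) (hβ : ENNReal.ofReal β < bT T X₀) {l ε : ι → ℝ}
    (hl : ∀ i, l i ∈ Set.Icc α β) (hε : ∀ i, 0 < ε i) (y : ι → X₀) :
    ∃ x : X, ∀ i, 0 < lowerDensity {n | ‖((l i • T) ^ n) x - y i‖ ≤ ε i} := by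
  have hα0 : 0 < α := ENNReal.ofReal_pos.1 ((zero_le).trans_lt hα)
  obtain ⟨ρ, hρ, C, d, hC⟩ :=
    exists_norm_smul_pow_apply_inv_pow_smul_iterate_le hTS hαβ hα hβ
  refine exists_forall_lowerDensity_norm_sub_le_pos (L := fun i m => (l i • T) ^ m)
    (u := fun i n => (l i)⁻¹ ^ n • (S^[n] (y i) : X)) (C := fun i => C (y i)) (d := d) hρ hε
    ?_ ?_ ?_
  · intro i n
    simpa [Nat.dist_zero_left] using hC (y i) _ (hl i) _ (hl i) 0 n (.inl rfl)
  · exact fun i m =>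
      smul_pow_apply_inv_pow_smul_iterate_self hTS (hα0.trans_le (hl i).1).ne' m (y i)
  · exact fun i j m n h => hC (y j) _ (hl i) _ (hl j) m n (h.imp_left (congrArg l))

end RightInverse


/-- Theorem 2.11: if `Λ` is a countable relatively compact nonempty subset of
`(a_T(X₀,S), b_T(X₀,S))`, then the multiples `λT`, `λ ∈ Λ`, share a common
frequently hypercyclic vector. -/
theorem stmt4 {X : Type*} [NormedAddCommGroup X] [NormedSpace ℝ X]
    [CompleteSpace X] [TopologicalSpace.SeparableSpace X]
    (T : X →L[ℝ] X) (X₀ : Set X) (hX₀ : Dense X₀) (S : X₀ → X₀)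
    (hTS : ∀ x : X₀, T ((S x : X₀) : X) = (x : X))
    (Λ : Set ℝ) (hne : Λ.Nonempty) (hcount : Λ.Countable)
    (hcomp : IsCompact (closure Λ))
    (hsub : closure Λ ⊆ {l : ℝ | aT X₀ S < ENNReal.ofReal l ∧ ENNReal.ofReal l < bT T X₀}) :
    ∃ x : X, ∀ l ∈ Λ, x ∈ FHC (l • T) := by
  obtain ⟨α, hαm, hαl⟩ := hcomp.exists_isLeast hne.closure
  obtain ⟨β, hβm, hβl⟩ := hcomp.exists_isGreatest hne.closure
  have hΛ : ∀ l : Λ, (l : ℝ) ∈ Set.Icc α β := fun l =>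
    ⟨hαl (subset_closure l.2), hβl (subset_closure l.2)⟩
  have := UniformSpace.secondCountable_of_separable X
  have := hcount.to_subtype
  let B := TopologicalSpace.countableBasis X
  obtain ⟨z, ε, hz⟩ := exists_forall_closedBall_subset_of_dense hX₀ (U := fun V : B => (V : Set X))
    (fun V => TopologicalSpace.isOpen_of_mem_countableBasis V.2)
    (fun V => TopologicalSpace.nonempty_of_mem_countableBasis V.2)
  obtain ⟨x, hx⟩ := exists_forall_lowerDensity_norm_smul_pow_sub_le_pos (ι := Λ × B) hTS
    (hαl hβm) (hsub hαm).1 (hsub hβm).2 (fun p => hΛ p.1) (fun p => (hz p.2).1) (fun p => z p.2)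
  refine ⟨x, fun l hl => mem_FHC_of_isTopologicalBasis
    (TopologicalSpace.isBasis_countableBasis X) fun V hV _ => ?_⟩
  exact (hx (⟨l, hl⟩, ⟨V, hV⟩)).trans_le
    (lowerDensity_mono fun m hm => (hz ⟨V, hV⟩).2 (mem_closedBall_iff_norm.2 hm))
end

section
/- Let X be a separable Banach space and (T_s)_{s≥1} a countable family of bounded linear operators on X. Assume there exist a dense linear subspace X₀ of X with T_s(X₀) ⊆ X₀ and X₀ ⊆ Per(T_s) for every s ≥ 1, and a constant α ∈ (0,1), such that: for every s, q ≥ 1, every ε > 0 and every x, y ∈ X₀, there exist z ∈ X₀ and integers n, d ≥ 1 such that for every 1 ≤ t ≤ q: (1) d is a multiple of p_{T_t}(y) and of p_{T_t}(z); (2) ‖T_t^k(z)‖ < ε for every 0 ≤ k ≤ αd; (3) ‖T_s^{n+k}(z) − T_s^k(x)‖ < ε for every 0 ≤ k ≤ αd. Then there exists a common frequently hypercyclic vector for the family (T_s)_{s≥1}. -/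
open Filter Topology

/-!
The vector is built as a sum of successive bumps `z`, each periodic, small during the first `α d`
iterates of its period `d`, and following a prescribed orbit along a window of `α d` later iterates.
Adding a bump of much larger period than everything before it keeps at least the proportion `α` of
the visits that the current vector makes to a ball, and, since the bump is also small at the start
of its period, at least the proportion `α / 2` of the visits counted from time `0`. If the schedule
returns to each operator and each target within bounded gaps, then only boundedly many bumps
separate a visit from the time at which it is counted, so its frequency stays bounded below.

To make `w` visit `x` under `T s`, the bumps should follow the orbit of `g = x - w`, but the
criterion does not control the starting time `n` of a bump modulo the period `p` of `g`: a bump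
made for `v` only follows `(T s)^[r] v` for an unknown `r < p`. So one makes bumps for all the
vectors `∑ₐ cₐ T^[(p - 1) a] g`, with `p + 1` possible values for each of the `p` coefficients. By
the pigeonhole principle, two families of coefficients with the same shift `r` differ only at the
index `r`, and the difference of their bumps follows, up to a scalar, the orbit of `g` itself.
-/

/-! ### Counting in windows -/

/-- The number of elements of `A` in `{a, …, a + N - 1}`. -/
noncomputable def windowCount (A : Set ℕ) (a N : ℕ) : ℝ :=
  ∑ k ∈ Finset.range N, A.indicator (fun _ => (1 : ℝ)) (a + k)

section windowCount

variable {A B : Set ℕ} {D : ℕ}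

theorem windowCount_nonneg (A : Set ℕ) (a N : ℕ) : 0 ≤ windowCount A a N :=
  Finset.sum_nonneg fun _ _ => Set.indicator_nonneg (fun _ _ => zero_le_one) _

theorem windowCount_le (A : Set ℕ) (a N : ℕ) : windowCount A a N ≤ N := by
  calc windowCount A a N ≤ ∑ _k ∈ Finset.range N, (1 : ℝ) :=
        Finset.sum_le_sum fun _ _ => Set.indicator_le_self' (fun _ _ => zero_le_one) _
    _ = N := by simp

theorem windowCount_le_of_forall {a N : ℕ} (h : ∀ k < N, a + k ∈ A → a + k ∈ B) :
    windowCount A a N ≤ windowCount B a N := by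
  classical
  refine Finset.sum_le_sum fun k hk => ?_
  simp only [Set.indicator_apply]
  split_ifs with hA hB
  · exact le_rfl
  · exact absurd (h k (Finset.mem_range.1 hk) hA) hB
  · exact zero_le_one
  · exact le_rfl

theorem windowCount_add (A : Set ℕ) (a M N : ℕ) :
    windowCount A a (M + N) = windowCount A a M + windowCount A (a + M) N := by
  simp only [windowCount, Finset.sum_range_add, add_assoc]

theorem windowCount_monotone (A : Set ℕ) (a : ℕ) : Monotone (windowCount A a) := fun M N h => by
  obtain ⟨r, rfl⟩ := Nat.exists_eq_add_of_le h
  rw [windowCount_add]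
  exact le_add_of_nonneg_right (windowCount_nonneg _ _ _)

theorem windowCount_eq_of_periodic (hA : Function.Periodic (· ∈ A) D) (a b : ℕ) :
    windowCount A a D = windowCount A b D := by
  have hind : Function.Periodic (A.indicator fun _ => (1 : ℝ)) D := fun m => by
    classical
    simp only [Set.indicator_apply, show (m + D ∈ A) = (m ∈ A) from hA m]
  suffices h : ∀ a, windowCount A a D = windowCount A 0 D from (h a).trans (h b).symm
  intro a
  induction a with
  | zero => rfl
  | succ a ih =>
    have hsplit := windowCount_add A a 1 D
    rw [add_comm 1 D, windowCount_add] at hsplit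
    have hshift : windowCount A (a + D) 1 = windowCount A a 1 := by
      simpa [windowCount] using hind a
    linarith

theorem windowCount_mul_of_periodic (hA : Function.Periodic (· ∈ A) D) (a q : ℕ) :
    windowCount A a (q * D) = q * windowCount A a D := by
  induction q with
  | zero => simp [windowCount]
  | succ q ih =>
    rw [add_mul, one_mul, windowCount_add, ih, windowCount_eq_of_periodic hA (a + q * D) a]
    push_cast
    ring

end windowCount

/-- `A` meets every window of length `N` in at least `β * (N - K)` points: it has density at least
`β`, uniformly in the position of the window, up to the scale `K`. -/
def DenseAtScale (A : Set ℕ) (β : ℝ) (K : ℕ) : Prop :=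
  ∀ a N : ℕ, β * ((N : ℝ) - K) ≤ windowCount A a N

/-- `A` has at least `β * N` elements below `N`, for every `N ≥ M`. -/
def PrefixDense (A : Set ℕ) (β : ℝ) (M : ℕ) : Prop :=
  ∀ N ≥ M, β * (N : ℝ) ≤ windowCount A 0 N

section density

variable {A B : Set ℕ} {α β : ℝ} {d D K M : ℕ}

theorem DenseAtScale.mono_set (h : DenseAtScale A β K) (hAB : A ⊆ B) : DenseAtScale B β K :=
  fun a N => (h a N).trans (windowCount_le_of_forall fun _ _ hk => hAB hk)

theorem DenseAtScale.mono_scale (h : DenseAtScale A β K) (hβ : 0 ≤ β) (hK : K ≤ M) :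
    DenseAtScale A β M := fun a N => by
  refine le_trans ?_ (h a N)
  gcongr

theorem DenseAtScale.mono_density (h : DenseAtScale A β K) (hα : 0 ≤ α) (hαβ : α ≤ β) :
    DenseAtScale A α K := fun a N => by
  rcases le_total (N : ℝ) K with hN | hN
  · exact (mul_nonpos_of_nonneg_of_nonpos hα (by linarith)).trans (windowCount_nonneg _ _ _)
  · exact (mul_le_mul_of_nonneg_right hαβ (by linarith)).trans (h a N)

theorem DenseAtScale.prefixDense (h : DenseAtScale A β K) (hβ : 0 ≤ β) :
    PrefixDense A (β / 2) (2 * K) := fun N hN => by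
  have hN' : 2 * (K : ℝ) ≤ N := by exact_mod_cast hN
  nlinarith [h 0 N]

theorem PrefixDense.mono_set (h : PrefixDense A β M) (hAB : A ⊆ B) : PrefixDense B β M :=
  fun N hN => (h N hN).trans (windowCount_le_of_forall fun _ _ hk => hAB hk)

theorem denseAtScale_of_periodic (hA : Function.Periodic (· ∈ A) D) (hD : 0 < D) (hβ : 0 ≤ β)
    {a₀ : ℕ} (h : β * D ≤ windowCount A a₀ D) : DenseAtScale A β D := fun a N => by
  have hN : (N : ℝ) ≤ (N / D : ℕ) * D + D := by
    exact_mod_cast (Nat.lt_div_mul_add hD).le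
  calc β * ((N : ℝ) - D) ≤ β * ((N / D : ℕ) * D) := by gcongr; linarith
    _ = (N / D : ℕ) * (β * D) := by ring
    _ ≤ (N / D : ℕ) * windowCount A a D := by
        rw [windowCount_eq_of_periodic hA a a₀]
        gcongr
    _ = windowCount A a (N / D * D) := (windowCount_mul_of_periodic hA _ _).symm
    _ ≤ windowCount A a N := windowCount_monotone A a (Nat.div_mul_le_self N D)

theorem denseAtScale_dvd (hD : 0 < D) : DenseAtScale {m | D ∣ m} (1 / D) D := by
  refine denseAtScale_of_periodic (a₀ := 0) (fun m => by simp) hD (by positivity) ?_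
  calc (1 / D : ℝ) * D = windowCount {m | D ∣ m} 0 1 := by simp [windowCount, hD.ne']
    _ ≤ windowCount {m | D ∣ m} 0 D := windowCount_monotone _ _ hD

theorem lowerDensity_pos_of_prefixDense (hβ : 0 < β) (h : PrefixDense A β M) :
    0 < lowerDensity A := by
  have hquot : ∀ n, (∑ k ∈ Finset.range (n + 1), A.indicator (fun _ => (1 : ℝ)) k) / ((n : ℝ) + 1)
      = windowCount A 0 (n + 1) / ((n + 1 : ℕ) : ℝ) := fun n => by simp [windowCount]
  have hle : ∀ n, windowCount A 0 (n + 1) / ((n + 1 : ℕ) : ℝ) ≤ 1 := fun n =>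
    (div_le_one (by positivity)).2 (windowCount_le A 0 (n + 1))
  refine hβ.trans_le (le_liminf_of_le ?_ ?_)
  · exact IsCoboundedUnder.of_frequently_le (a := 1)
      (Frequently.of_forall fun n => (hquot n).trans_le (hle n))
  · filter_upwards [eventually_ge_atTop M] with n hn
    rw [hquot, le_div_iff₀ (by positivity)]
    exact h (n + 1) (by omega)

/-- The times congruent modulo `d` to a time in `[n, n + L]`. -/
def periodicWindow (n d : ℕ) (L : ℝ) : Set ℕ :=
  {m | ∃ k : ℕ, (k : ℝ) ≤ L ∧ m ≡ n + k [MOD d]}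

theorem add_mem_periodicWindow {n k : ℕ} {L : ℝ} (hk : (k : ℝ) ≤ L) :
    n + k ∈ periodicWindow n d L :=
  ⟨k, hk, rfl⟩

theorem periodicWindow_eq_univ {n : ℕ} {L : ℝ} (hd : 0 < d) (hL : (d : ℝ) ≤ L) :
    periodicWindow n d L = Set.univ := by
  refine Set.eq_univ_of_forall fun m => ?_
  obtain ⟨j, hj⟩ : ∃ j, n ≤ m + j * d := ⟨n, by nlinarith⟩
  refine ⟨(m + j * d - n) % d, ?_, ?_⟩
  · exact le_trans (by exact_mod_cast (Nat.mod_lt _ hd).le) hL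
  · calc m ≡ m + j * d [MOD d] := by simp [Nat.ModEq]
      _ = n + (m + j * d - n) := by omega
      _ ≡ n + (m + j * d - n) % d [MOD d] := (Nat.mod_modEq _ _).symm.add_left n

variable {A' : Set ℕ}

theorem DenseAtScale.of_inter_periodicWindow {n : ℕ} (h : DenseAtScale A β K) (hβ : 0 ≤ β)
    (hα0 : 0 ≤ α) (hα1 : α ≤ 1) (hd : 0 < d) (hA' : Function.Periodic (· ∈ A') d)
    (hsub : A ∩ periodicWindow n d (α * d + K) ⊆ A') :
    DenseAtScale A' (α * β) (max K d) := by
  have hαβ : α * β ≤ β := mul_le_of_le_one_left hβ hα1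
  rcases le_or_gt (d : ℝ) (α * d + K) with hlong | hshort
  · rw [periodicWindow_eq_univ hd hlong, Set.inter_univ] at hsub
    exact ((h.mono_set hsub).mono_density (by positivity) hαβ).mono_scale (by positivity)
      (le_max_left _ _)
  · set L := ⌊α * d + K⌋₊
    have hpos : 0 ≤ α * d + K := by positivity
    have hLd : L + 1 ≤ d := (Nat.floor_lt hpos).2 hshort
    have hL' : α * d + K ≤ (L + 1 : ℕ) := by
      push_cast
      exact (Nat.lt_floor_add_one _).le
    refine (denseAtScale_of_periodic hA' hd (by positivity) (a₀ := n) ?_).mono_scale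
      (by positivity) (le_max_right _ _)
    calc α * β * d ≤ β * ((L + 1 : ℕ) - K) := by nlinarith
      _ ≤ windowCount A n (L + 1) := h n (L + 1)
      _ ≤ windowCount A' n (L + 1) := windowCount_le_of_forall fun k hk hkA =>
          hsub ⟨hkA, add_mem_periodicWindow ((Nat.le_floor_iff hpos).1 (by omega))⟩
      _ ≤ windowCount A' n d := windowCount_monotone A' n hLd

theorem PrefixDense.of_inter_periodicWindow (h : PrefixDense A β M) (hβ : 0 ≤ β)
    (hα0 : 0 ≤ α) (hα1 : α ≤ 1) (hMK : M ≤ K) (hA' : DenseAtScale A' (α * β) (max K d))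
    (hsub : A ∩ periodicWindow 0 d (α * d + K) ⊆ A') :
    PrefixDense A' (α / 2 * β) M := fun N hN => by
  have hαβ : 0 ≤ α * β := by positivity
  have hpos : 0 ≤ α * d + K := by positivity
  set L := ⌊α * d + K⌋₊ + 1
  have hcount : ∀ N' ≤ L, M ≤ N' → β * N' ≤ windowCount A' 0 N' := fun N' hN'L hMN' =>
    (h N' hMN').trans <| windowCount_le_of_forall fun k hk hkA =>
      hsub ⟨hkA, add_mem_periodicWindow ((Nat.le_floor_iff hpos).1 (by omega))⟩
  rcases le_or_gt N L with hNL | hLN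
  · calc α / 2 * β * N ≤ β * N := by gcongr; nlinarith
      _ ≤ windowCount A' 0 N := hcount N hNL hN
  · rcases le_or_gt (2 * max K d) N with hlong | hshort
    · have := hA'.prefixDense hαβ N hlong
      linarith
    · have hLK : K ≤ ⌊α * d + K⌋₊ := Nat.le_floor (by nlinarith [Nat.cast_nonneg (α := ℝ) d])
      have hL : α * d + K ≤ (L : ℕ) := by
        push_cast [L]
        exact (Nat.lt_floor_add_one _).le
      have hN2 : α * N ≤ 2 * (α * d + K) := by
        have hshort' : (N : ℝ) ≤ 2 * max (K : ℝ) d := by exact_mod_cast hshort.le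
        have hmax : α * max (K : ℝ) d ≤ α * d + K := by
          rcases max_cases (K : ℝ) d with ⟨h, -⟩ | ⟨h, -⟩ <;> rw [h] <;> nlinarith
        nlinarith
      calc α / 2 * β * N ≤ β * L := by nlinarith
        _ ≤ windowCount A' 0 L := hcount L le_rfl (by omega)
        _ ≤ windowCount A' 0 N := windowCount_monotone A' 0 hLN.le

end density

/-! ### Visits and refinements -/

/-- The times at which the orbit of `w` under `S` is in the open ball of radius `ρ` around `x`. -/
def visits {X : Type*} [PseudoMetricSpace X] (S : X → X) (w x : X) (ρ : ℝ) : Set ℕ :=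
  {m | dist (S^[m] w) x < ρ}

theorem visits_periodic {X : Type*} [PseudoMetricSpace X] {S : X → X} {w : X} {d : ℕ}
    (hw : Function.IsPeriodicPt S d w) (x : X) (ρ : ℝ) :
    Function.Periodic (· ∈ visits S w x ρ) d := fun m => by
  simp only [visits, Set.mem_ofPred_eq, Function.iterate_add_apply, hw.eq]

theorem iterate_eq_of_modEq {X : Type*} {S : X → X} {w : X} {d m n : ℕ}
    (hw : Function.IsPeriodicPt S d w) (h : m ≡ n [MOD d]) : S^[m] w = S^[n] w := by
  rw [← hw.iterate_mod_apply m, h, hw.iterate_mod_apply]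

theorem exists_lt_iterate_add_eq {X : Type*} {S : X → X} {v : X} {p : ℕ} (hp : 0 < p)
    (hv : Function.IsPeriodicPt S p v) (n : ℕ) : ∃ r < p, S^[n + r] v = v := by
  refine ⟨((p - 1) * n) % p, Nat.mod_lt _ hp, ?_⟩
  have hmod : n + (p - 1) * n % p ≡ n * p [MOD p] := by
    calc n + (p - 1) * n % p ≡ n + (p - 1) * n [MOD p] := (Nat.mod_modEq _ _).add_left n
      _ = (p - 1 + 1) * n := by ring
      _ = n * p := by rw [Nat.sub_add_cancel hp, mul_comm]
  rw [iterate_eq_of_modEq hv hmod]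
  exact hv.const_mul n

/-- An approximation of the common frequently hypercyclic vector: its orbits are controlled up to
the time `scale`. -/
structure Stage (X : Type*) where
  point : X
  scale : ℕ

/-- `b` refines `a`: for `T 0, …, T q` the orbits of the two points are `ε`-close up to the scale
of `a`, and all visiting densities visible at the scale of `a` survive at the scale of `b`, at the
cost of a factor `κ` and of an enlargement of the radius by `ε`. -/
structure IsRefinement {X F : Type*} [PseudoMetricSpace X] [FunLike F X X] (T : ℕ → F) (q : ℕ)
    (ε κ : ℝ) (a b : Stage X) : Prop where
  two_mul_scale_lt : 2 * a.scale < b.scale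
  dist_iterate_lt : ∀ t ≤ q, ∀ k ≤ a.scale, dist ((T t)^[k] a.point) ((T t)^[k] b.point) < ε
  density : ∀ t ≤ q, ∀ x ρ β M, 0 ≤ β → M ≤ 2 * a.scale →
    DenseAtScale (visits (T t) a.point x ρ) β a.scale →
    PrefixDense (visits (T t) a.point x ρ) β M →
    DenseAtScale (visits (T t) b.point x (ρ + ε)) (κ * β) b.scale ∧
      PrefixDense (visits (T t) b.point x (ρ + ε)) (κ * β) M

section refinement

variable {X F : Type*}

theorem IsRefinement.trans [PseudoMetricSpace X] [FunLike F X X] {T : ℕ → F} {q : ℕ}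
    {ε₁ ε₂ κ₁ κ₂ : ℝ} {a b c : Stage X} (hab : IsRefinement T q ε₁ κ₁ a b)
    (hbc : IsRefinement T q ε₂ κ₂ b c) (hκ₁ : 0 ≤ κ₁) :
    IsRefinement T q (ε₁ + ε₂) (κ₂ * κ₁) a c where
  two_mul_scale_lt := by
    have := hab.two_mul_scale_lt
    have := hbc.two_mul_scale_lt
    omega
  dist_iterate_lt t ht k hk := by
    have hkb : k ≤ b.scale := by
      have := hab.two_mul_scale_lt
      omega
    exact (dist_triangle _ _ _).trans_lt
      (add_lt_add (hab.dist_iterate_lt t ht k hk) (hbc.dist_iterate_lt t ht k hkb))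
  density t ht x ρ β M hβ hM hdense hprefix := by
    have hMb : M ≤ 2 * b.scale := by
      have := hab.two_mul_scale_lt
      omega
    obtain ⟨hdense', hprefix'⟩ := hab.density t ht x ρ β M hβ hM hdense hprefix
    rw [← add_assoc, mul_assoc]
    exact hbc.density t ht x _ _ M (mul_nonneg hκ₁ hβ) hMb hdense' hprefix'

theorem isRefinement_add [SeminormedAddCommGroup X] [FunLike F X X] [AddMonoidHomClass F X X]
    {T : ℕ → F} {q d K : ℕ} {ε α : ℝ} {a : Stage X} {z : X} (hα0 : 0 ≤ α) (hα1 : α ≤ 1)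
    (hd : 0 < d) (hK : 2 * a.scale < K)
    (ha : ∀ t ≤ q, Function.IsPeriodicPt (T t) d a.point)
    (hz : ∀ t ≤ q, Function.IsPeriodicPt (T t) d z)
    (hsmall : ∀ t ≤ q, ∀ k : ℕ, (k : ℝ) ≤ α * d + K → ‖(T t)^[k] z‖ < ε) :
    IsRefinement T q ε (α / 2) a ⟨a.point + z, max K d⟩ where
  two_mul_scale_lt := hK.trans_le (le_max_left _ _)
  dist_iterate_lt t ht k hk := by
    rw [iterate_map_add, dist_self_add_right]
    have hkK : (k : ℝ) ≤ K := by exact_mod_cast (by omega : k ≤ K)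
    exact hsmall t ht k (hkK.trans (le_add_of_nonneg_left (by positivity)))
  density t ht x ρ β M hβ hM hdense hprefix := by
    have hper : Function.IsPeriodicPt (T t) d (a.point + z) := by
      rw [Function.IsPeriodicPt, Function.IsFixedPt, iterate_map_add, (ha t ht).eq, (hz t ht).eq]
    have hsub : visits (T t) a.point x ρ ∩ periodicWindow 0 d (α * d + K) ⊆
        visits (T t) (a.point + z) x (ρ + ε) := by
      rintro m ⟨hm, k, hk, hmk⟩
      rw [zero_add] at hmk
      calc dist ((T t)^[m] (a.point + z)) x
          = dist ((T t)^[m] a.point + (T t)^[m] z) x := by rw [iterate_map_add]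
        _ ≤ dist ((T t)^[m] a.point) x + ‖(T t)^[k] z‖ := by
            rw [← iterate_eq_of_modEq (hz t ht) hmk, add_comm (dist _ x)]
            refine (dist_triangle _ ((T t)^[m] a.point) _).trans_eq ?_
            rw [dist_self_add_left]
        _ < ρ + ε := add_lt_add hm (hsmall t ht k hk)
    have hdense' := (hdense.mono_scale hβ (by omega : a.scale ≤ K)).of_inter_periodicWindow hβ
      hα0 hα1 hd (visits_periodic hper x (ρ + ε)) hsub
    exact ⟨hdense'.mono_density (by positivity) (by gcongr; linarith),
      hprefix.of_inter_periodicWindow hβ hα0 hα1 (by omega) hdense' hsub⟩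

end refinement

section chain

variable {X F : Type*} [PseudoMetricSpace X] [FunLike F X X] {T : ℕ → F} {p : ℕ → Stage X}
  {ε : ℕ → ℝ} {κ : ℝ}

theorem strictMono_scale_of_isRefinement
    (hp : ∀ i, IsRefinement T i (ε i) κ (p i) (p (i + 1))) : StrictMono fun i => (p i).scale :=
  strictMono_nat_of_lt_succ fun i => by
    have := (hp i).two_mul_scale_lt
    omega

theorem density_of_isRefinement_chain
    (hp : ∀ i, IsRefinement T i (ε i) κ (p i) (p (i + 1))) (hκ : 0 ≤ κ) {a t M : ℕ} (ht : t ≤ a)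
    {x : X} {ρ β : ℝ} (hβ : 0 ≤ β) (hM : M ≤ 2 * (p a).scale)
    (hdense : DenseAtScale (visits (T t) (p a).point x ρ) β (p a).scale)
    (hprefix : PrefixDense (visits (T t) (p a).point x ρ) β M) (g : ℕ) :
    DenseAtScale (visits (T t) (p (a + g)).point x (ρ + ∑ j ∈ Finset.range g, ε (a + j)))
        (κ ^ g * β) (p (a + g)).scale ∧
      PrefixDense (visits (T t) (p (a + g)).point x (ρ + ∑ j ∈ Finset.range g, ε (a + j)))
        (κ ^ g * β) M := by
  induction g with
  | zero => simpa using ⟨hdense, hprefix⟩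
  | succ g ih =>
    have hMg : M ≤ 2 * (p (a + g)).scale :=
      hM.trans (Nat.mul_le_mul_left 2
        ((strictMono_scale_of_isRefinement hp).monotone (Nat.le_add_right a g)))
    rw [Finset.sum_range_succ, ← add_assoc ρ, pow_succ', mul_assoc]
    exact (hp (a + g)).density t (by omega) x _ _ M (by positivity) hMg ih.1 ih.2

variable (hp : ∀ i, IsRefinement T i ((1 / 2) ^ i) κ (p i) (p (i + 1)))
include hp

theorem cauchySeq_point_of_isRefinement : CauchySeq fun i => (p i).point :=
  cauchySeq_of_le_geometric_two (C := 2) fun i => by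
    simpa using ((hp i).dist_iterate_lt 0 (Nat.zero_le i) 0 (Nat.zero_le _)).le

theorem dist_iterate_limit_le (hT : ∀ t, Continuous (T t)) {u : X}
    (hu : Tendsto (fun i => (p i).point) atTop (𝓝 u)) {i t m : ℕ} (ht : t ≤ i)
    (hm : m ≤ (p i).scale) : dist ((T t)^[m] (p i).point) ((T t)^[m] u) ≤ 2 * (1 / 2) ^ i := by
  have hlim : Tendsto (fun n => (T t)^[m] (p (i + n)).point) atTop (𝓝 ((T t)^[m] u)) := by
    simp_rw [add_comm i]
    exact (((hT t).iterate m).tendsto u).comp ((tendsto_add_atTop_iff_nat i).2 hu)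
  refine dist_le_of_le_geometric_two_of_tendsto₀ (C := 2 * (1 / 2) ^ i) (fun n => ?_) hlim
  have hmn : m ≤ (p (i + n)).scale :=
    hm.trans ((strictMono_scale_of_isRefinement hp).monotone (Nat.le_add_right i n))
  refine ((hp (i + n)).dist_iterate_lt t (by omega) m hmn).le.trans_eq ?_
  rw [pow_add, one_div_pow 2 n]
  ring

theorem windowCount_visits_limit (hκ : 0 ≤ κ) (hT : ∀ t, Continuous (T t)) {u : X}
    (hu : Tendsto (fun i => (p i).point) atTop (𝓝 u)) {a g t N : ℕ} (ht : t ≤ a) {x : X}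
    {ρ β : ℝ} (hβ : 0 ≤ β)
    (hdense : DenseAtScale (visits (T t) (p a).point x ρ) β (p a).scale)
    (hN : 2 * (p a).scale ≤ N) (hN' : N ≤ (p (a + g)).scale) :
    κ ^ g * (β / 2) * N ≤ windowCount (visits (T t) u x (ρ + 4 * (1 / 2) ^ a)) 0 N := by
  have hprefix := (density_of_isRefinement_chain hp hκ ht (by positivity) le_rfl
    (hdense.mono_density (by positivity) (half_le_self hβ)) (hdense.prefixDense hβ) g).2
  refine (hprefix N hN).trans (windowCount_le_of_forall fun m hmN hm => ?_)
  rw [zero_add] at hm ⊢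
  have hsum : ∑ j ∈ Finset.range g, (1 / 2 : ℝ) ^ (a + j) ≤ 2 * (1 / 2) ^ a := by
    simp_rw [pow_add, ← Finset.mul_sum]
    rw [mul_comm (2 : ℝ)]
    gcongr
    exact sum_geometric_two_le g
  have hpow : (1 / 2 : ℝ) ^ (a + g) ≤ (1 / 2) ^ a :=
    pow_le_pow_of_le_one (by norm_num) (by norm_num) (Nat.le_add_right a g)
  have hclose := dist_iterate_limit_le hp hT hu (ht.trans (Nat.le_add_right a g))
    (hmN.le.trans hN')
  calc dist ((T t)^[m] u) x
      ≤ dist ((T t)^[m] (p (a + g)).point) ((T t)^[m] u)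
        + dist ((T t)^[m] (p (a + g)).point) x := dist_triangle_left _ _ _
    _ < 2 * (1 / 2) ^ (a + g) + (ρ + ∑ j ∈ Finset.range g, (1 / 2) ^ (a + j)) :=
        add_lt_add_of_le_of_lt hclose hm
    _ ≤ ρ + 4 * (1 / 2) ^ a := by linarith

end chain

/-! ### Periodic points of linear maps -/

section periodic

variable {X F : Type*} [AddCommGroup X] [FunLike F X X]

section additive

variable [AddMonoidHomClass F X X] {S : F} {d : ℕ} {x y : X}

theorem isPeriodicPt_zero (S : F) (d : ℕ) : Function.IsPeriodicPt S d (0 : X) :=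
  iterate_map_zero S d

theorem isPeriodicPt_add (hx : Function.IsPeriodicPt S d x) (hy : Function.IsPeriodicPt S d y) :
    Function.IsPeriodicPt S d (x + y) :=
  (iterate_map_add S d x y).trans (congrArg₂ _ hx hy)

theorem isPeriodicPt_sub (hx : Function.IsPeriodicPt S d x) (hy : Function.IsPeriodicPt S d y) :
    Function.IsPeriodicPt S d (x - y) :=
  (iterate_map_sub S d x y).trans (congrArg₂ _ hx hy)

end additive

variable {𝕜 : Type*} [Field 𝕜] [Module 𝕜 X] [LinearMapClass F 𝕜 X X]

theorem iterate_map_smul_of_linear (S : F) (n : ℕ) (c : 𝕜) (x : X) :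
    S^[n] (c • x) = c • S^[n] x :=
  Function.Commute.iterate_left (f := S) (g := (c • ·)) (map_smul S c) n x

theorem isPeriodicPt_smul {S : F} {d : ℕ} {x : X} (c : 𝕜) (hx : Function.IsPeriodicPt S d x) :
    Function.IsPeriodicPt S d (c • x) :=
  (iterate_map_smul_of_linear S d c x).trans (congrArg _ hx)

theorem isPeriodicPt_of_add_smul {S : F} {d : ℕ} {u v : X} {c c' : 𝕜} (hc : c ≠ c')
    (h : Function.IsPeriodicPt S d (u + c • v)) (h' : Function.IsPeriodicPt S d (u + c' • v)) :
    Function.IsPeriodicPt S d u ∧ Function.IsPeriodicPt S d v := by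
  have hv : Function.IsPeriodicPt S d v := by
    have := isPeriodicPt_smul (c - c')⁻¹ (isPeriodicPt_sub h h')
    rwa [add_sub_add_left_eq_sub, ← sub_smul, inv_smul_smul₀ (sub_ne_zero.2 hc)] at this
  exact ⟨by simpa using isPeriodicPt_sub h (isPeriodicPt_smul c hv), hv⟩

/-- The sum `∑ c a • S^[(p - 1) * a] g` attached to a family `c` of coefficients indexed by the
residues modulo a period `p` of `g`: applying `S^[r]` turns its term of index `r` into `c r • g`. -/
def orbitSum (S : F) (g : X) {p : ℕ} (c : Fin p → 𝕜) : X :=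
  ∑ a, c a • S^[(p - 1) * a] g

theorem isPeriodicPt_orbitSum {S : F} {g : X} {p : ℕ} (hg : Function.IsPeriodicPt S p g)
    (c : Fin p → 𝕜) : Function.IsPeriodicPt S p (orbitSum S g c) :=
  Finset.sum_induction _ (Function.IsPeriodicPt S p) (fun _ _ => isPeriodicPt_add)
    (isPeriodicPt_zero S p) fun _ _ => isPeriodicPt_smul _ (hg.apply_iterate _)

theorem iterate_orbitSum_sub {S : F} {g : X} {p : ℕ} (hg : Function.IsPeriodicPt S p g)
    {c c' : Fin p → 𝕜} {r : Fin p} (h : ∀ a ≠ r, c a = c' a) :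
    S^[r] (orbitSum S g c) - S^[r] (orbitSum S g c') = (c r - c' r) • g := by
  have hdiff : orbitSum S g c - orbitSum S g c' = (c r - c' r) • S^[(p - 1) * r] g := by
    rw [orbitSum, orbitSum, ← Finset.sum_sub_distrib, Finset.sum_eq_single r, sub_smul]
    · intro a _ ha
      rw [h a ha, sub_self]
    · simp
  have hshift : (r : ℕ) + (p - 1) * r = p * r := by
    rw [add_comm, ← Nat.succ_mul, Nat.succ_eq_add_one, Nat.sub_add_cancel r.pos]
  rw [← iterate_map_sub, hdiff, iterate_map_smul_of_linear, ← Function.iterate_add_apply, hshift,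
    (hg.mul_const r).eq]

variable (𝕜) {ι : Type*} [Finite ι] (S : ι → F)

-- The periods of `u + c • v` are bounded independently of `c`, so they agree for two values of `c`.
theorem exists_isPeriodicPt_of_add_smul [Infinite 𝕜] {u v : X}
    (hu : ∀ i, u ∈ Function.periodicPts (S i)) (hv : ∀ i, v ∈ Function.periodicPts (S i)) :
    ∃ c : 𝕜, ∀ i d, Function.IsPeriodicPt (S i) d (u + c • v) →
      Function.IsPeriodicPt (S i) d u ∧ Function.IsPeriodicPt (S i) d v := by
  let P : ι → ℕ := fun i =>
    Function.minimalPeriod (S i) u * Function.minimalPeriod (S i) v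
  have hP : ∀ i, 0 < P i := fun i => Nat.mul_pos
    (Function.minimalPeriod_pos_of_mem_periodicPts (hu i))
    (Function.minimalPeriod_pos_of_mem_periodicPts (hv i))
  have hper : ∀ i (c : 𝕜), Function.IsPeriodicPt (S i) (P i) (u + c • v) := fun i c =>
    isPeriodicPt_add ((Function.isPeriodicPt_minimalPeriod (S i) u).mul_const _)
      (isPeriodicPt_smul c ((Function.isPeriodicPt_minimalPeriod (S i) v).const_mul _))
  let period : 𝕜 → ∀ i, Fin (P i + 1) := fun c i =>
    ⟨Function.minimalPeriod (S i) (u + c • v),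
      Nat.lt_succ_of_le ((hper i c).minimalPeriod_le (hP i))⟩
  obtain ⟨c, c', hcc', heq⟩ := Finite.exists_ne_map_eq_of_infinite period
  refine ⟨c, fun i d hd => isPeriodicPt_of_add_smul hcc' hd ?_⟩
  have hmin : Function.minimalPeriod (S i) (u + c • v) =
      Function.minimalPeriod (S i) (u + c' • v) := congrArg Fin.val (congrFun heq i)
  rw [Function.isPeriodicPt_iff_minimalPeriod_dvd] at hd ⊢
  rwa [← hmin]

variable {𝕜} in
theorem exists_mem_forall_isPeriodicPt [Infinite 𝕜] (V : Submodule 𝕜 X)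
    (hV : ∀ i, ∀ x ∈ V, x ∈ Function.periodicPts (S i)) (A : Finset X) (hA : ∀ x ∈ A, x ∈ V) :
    ∃ y ∈ V, ∀ i d, Function.IsPeriodicPt (S i) d y →
      ∀ x ∈ A, Function.IsPeriodicPt (S i) d x := by
  classical
  induction A using Finset.induction_on with
  | empty => exact ⟨0, V.zero_mem, by simp⟩
  | insert a A _ ih =>
    have haV : a ∈ V := hA a (Finset.mem_insert_self a A)
    obtain ⟨y, hyV, hy⟩ := ih fun x hx => hA x (Finset.mem_insert_of_mem hx)
    obtain ⟨c, hc⟩ := exists_isPeriodicPt_of_add_smul 𝕜 S (fun i => hV i a haV)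
      (fun i => hV i y hyV)
    refine ⟨a + c • y, V.add_mem haV (V.smul_mem c hyV), fun i d hd x hx => ?_⟩
    rcases Finset.mem_insert.1 hx with rfl | hxA
    · exact (hc i d hd).1
    · exact hy i d (hc i d hd).2 x hxA

end periodic

theorem exists_seq_one_le_norm_sub (𝕜 : Type*) [NontriviallyNormedField 𝕜] :
    ∃ γ : ℕ → 𝕜, Pairwise fun a b => 1 ≤ ‖γ a - γ b‖ := by
  obtain ⟨c, hc⟩ := NormedField.exists_lt_norm 𝕜 2
  have hlt : ∀ a b, a < b → 1 ≤ ‖c ^ b - c ^ a‖ := fun a b hab => by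
    obtain ⟨k, rfl⟩ := Nat.exists_eq_add_of_lt hab
    have h1 : 1 ≤ ‖c‖ ^ a := one_le_pow₀ (by linarith)
    have h2 : 1 ≤ ‖c‖ ^ k := one_le_pow₀ (by linarith)
    calc (1 : ℝ) ≤ ‖c‖ ^ a * (‖c‖ ^ k * ‖c‖ - 1) :=
          one_le_mul_of_one_le_of_one_le h1 (by nlinarith)
      _ = ‖c ^ (a + k + 1)‖ - ‖c ^ a‖ := by
          rw [norm_pow, norm_pow]
          ring
      _ ≤ ‖c ^ (a + k + 1) - c ^ a‖ := norm_sub_norm_le _ _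
  refine ⟨fun a => c ^ a, fun a b hab => ?_⟩
  rcases hab.lt_or_gt with h | h
  · rw [norm_sub_rev]
    exact hlt a b h
  · exact hlt b a h

/-! ### Combinatorial facts -/

theorem exists_ne_eq_off_of_card_lt {ι C : Type*} [Finite ι] [Finite C]
    (hcard : Nat.card ι < Nat.card C) (f : (ι → C) → ι) :
    ∃ b c c', c ≠ c' ∧ f c = b ∧ f c' = b ∧ ∀ a ≠ b, c a = c' a := by
  classical
  have := Fintype.ofFinite ι
  have := Fintype.ofFinite C
  rw [Nat.card_eq_fintype_card, Nat.card_eq_fintype_card] at hcard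
  obtain ⟨a₀⟩ : Nonempty ι := ⟨f fun _ => (Fintype.card_pos_iff.1 (by omega)).some⟩
  have hpos : 0 < Fintype.card ι := Fintype.card_pos_iff.2 ⟨a₀⟩
  obtain ⟨b, hb⟩ : ∃ b, Fintype.card C ^ (Fintype.card ι - 1) <
      (Finset.univ.filter fun c => f c = b).card := by
    refine Fintype.exists_lt_card_fiber_of_mul_lt_card f ?_
    rw [Fintype.card_fun]
    calc Fintype.card ι * Fintype.card C ^ (Fintype.card ι - 1)
        < Fintype.card C * Fintype.card C ^ (Fintype.card ι - 1) :=
          Nat.mul_lt_mul_of_pos_right hcard (pow_pos (by omega) _)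
      _ = Fintype.card C ^ Fintype.card ι := mul_pow_sub_one hpos.ne' _
  obtain ⟨c, hc, c', hc', hne, heq⟩ := Finset.exists_ne_map_eq_of_card_lt_of_maps_to
    (t := Finset.univ) (f := fun (c : ι → C) (a : {a // a ≠ b}) => c a)
    (by simpa [Fintype.card_subtype_compl] using hb)
    (fun _ _ => Finset.mem_coe.2 (Finset.mem_univ _))
  exact ⟨b, c, c', hne, (Finset.mem_filter.1 hc).2, (Finset.mem_filter.1 hc').2,
    fun a ha => congrFun heq ⟨a, ha⟩⟩

theorem exists_eq_add_of_le_add_natCast {L : ℝ} (hL : 0 ≤ L) {k K : ℕ} (hk : (k : ℝ) ≤ L + K) :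
    ∃ j ≤ K, ∃ i : ℕ, (i : ℝ) ≤ L ∧ k = j + i := by
  have hkK : k ≤ ⌊L⌋₊ + K := by
    rw [← Nat.floor_add_natCast hL]
    exact Nat.le_floor hk
  exact ⟨k - min k ⌊L⌋₊, by omega, min k ⌊L⌋₊,
    (Nat.le_floor_iff hL).1 (min_le_right _ _), by omega⟩

theorem exists_syndetic_schedule :
    ∃ r : ℕ → ℕ, (∀ i, r i ≤ i) ∧ ∀ j, ∃ G, ∀ m, ∃ a, m ≤ a ∧ a < m + G ∧ r a = j := by
  refine ⟨fun i => padicValNat 2 (i + 1), fun i => ?_, fun j => ⟨2 ^ (j + 1) + 2 ^ j, fun m => ?_⟩⟩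
  · exact Nat.lt_succ_iff.1
      ((padicValNat_le_nat_log (i + 1)).trans_lt (Nat.log_lt_self 2 i.succ_ne_zero))
  · obtain ⟨a, ha⟩ : ∃ a, a + 1 = 2 ^ j * (2 * (m / 2 ^ (j + 1) + 1) + 1) :=
      ⟨_, Nat.sub_add_cancel (Nat.succ_le_of_lt (by positivity))⟩
    have hval : padicValNat 2 (a + 1) = j := by
      rw [ha, padicValNat.mul (by positivity) (by positivity), padicValNat.prime_pow,
        padicValNat.eq_zero_of_not_dvd (by omega), add_zero]
    have hlow := Nat.div_mul_le_self m (2 ^ (j + 1))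
    have hhigh := Nat.lt_div_mul_add (a := m) (b := 2 ^ (j + 1)) (by positivity)
    have hpos : 0 < 2 ^ j := by positivity
    rw [pow_succ] at *
    exact ⟨a, by nlinarith, by nlinarith, hval⟩

theorem exists_seq_rel_succ {α : Type*} {R : ℕ → α → α → Prop} (h : ∀ n a, ∃ b, R n a b) (a : α) :
    ∃ p : ℕ → α, ∀ n, R n (p n) (p (n + 1)) := by
  choose f hf using h
  exact ⟨fun n => Nat.rec a f n, fun n => hf n _⟩

/-! ### The criterion -/

section criterion

variable {𝕜 X : Type*} [NontriviallyNormedField 𝕜] [SeminormedAddCommGroup X] [NormedSpace 𝕜 X]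

/-- The hypotheses of the criterion, in terms of iterates of the maps `T t` and of their periodic
points. -/
structure PeriodicApproximation (T : ℕ → X →L[𝕜] X) (X₀ : Submodule 𝕜 X) (α : ℝ) : Prop where
  pos : 0 < α
  lt_one : α < 1
  map_mem : ∀ t, ∀ x ∈ X₀, T t x ∈ X₀
  mem_periodicPts : ∀ t, ∀ x ∈ X₀, x ∈ Function.periodicPts (T t)
  exists_approx : ∀ s q : ℕ, ∀ ε : ℝ, 0 < ε → ∀ x ∈ X₀, ∀ y ∈ X₀, ∃ z ∈ X₀, ∃ n d : ℕ, 0 < d ∧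
    (∀ t ≤ q, Function.IsPeriodicPt (T t) d y ∧ Function.IsPeriodicPt (T t) d z ∧
      ∀ k : ℕ, (k : ℝ) ≤ α * d → ‖(T t)^[k] z‖ < ε) ∧
    ∀ k : ℕ, (k : ℝ) ≤ α * d → ‖(T s)^[n + k] z - (T s)^[k] x‖ < ε

/-- A periodic point, small during the times `k ≤ α * period + margin` and following a prescribed
orbit during the times `start + k` for the same `k`. -/
structure Bump (X : Type*) where
  point : X
  start : ℕ
  period : ℕ
  margin : ℕ

namespace Bump

/-- The times at which a bump follows its prescribed orbit. -/
def window (α : ℝ) (b : Bump X) : Set ℕ :=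
  periodicWindow b.start b.period (α * b.period + b.margin)

/-- The bump `b` may be used to perturb, by less than `ε` up to time `K`, a vector whose period
divides that of every vector of `A`. -/
structure IsAdmissible (T : ℕ → X →L[𝕜] X) (X₀ : Submodule 𝕜 X) (α : ℝ) (q : ℕ) (ε : ℝ)
    (A : Finset X) (K : ℕ) (b : Bump X) : Prop where
  mem : b.point ∈ X₀
  period_pos : 0 < b.period
  le_margin : K ≤ b.margin
  isPeriodicPt : ∀ t ≤ q, Function.IsPeriodicPt (T t) b.period b.point
  isPeriodicPt_of_mem : ∀ t ≤ q, ∀ x ∈ A, Function.IsPeriodicPt (T t) b.period x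
  norm_iterate_lt : ∀ t ≤ q, ∀ k : ℕ, (k : ℝ) ≤ α * b.period + b.margin →
    ‖(T t)^[k] b.point‖ < ε

/-- During its window, the bump `b` follows the orbit of `v` under `S` up to `ε`. -/
def Shadows (S : X → X) (α ε : ℝ) (v : X) (b : Bump X) : Prop :=
  ∀ m ∈ b.window α, ‖S^[m] b.point - S^[m] v‖ < ε

/-- The bump `b` lives at a much larger scale than `a` and its period is a period of `a`. -/
def Precedes (T : ℕ → X →L[𝕜] X) (q : ℕ) (a b : Bump X) : Prop :=
  2 * max a.margin a.period < b.margin ∧ ∀ t ≤ q, Function.IsPeriodicPt (T t) b.period a.point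

/-- The bump with its point multiplied by a scalar. -/
def smul (c : 𝕜) (b : Bump X) : Bump X := { b with point := c • b.point }

variable {T : ℕ → X →L[𝕜] X} {X₀ : Submodule 𝕜 X} {α ε : ℝ} {q K : ℕ} {A : Finset X} {a b : Bump X}

theorem IsAdmissible.smul {c : 𝕜} (hb : b.IsAdmissible T X₀ α q ε A K) (hc : ‖c‖ ≤ 1) :
    (b.smul c).IsAdmissible T X₀ α q ε A K where
  mem := X₀.smul_mem c hb.mem
  period_pos := hb.period_pos
  le_margin := hb.le_margin
  isPeriodicPt t ht := isPeriodicPt_smul c (hb.isPeriodicPt t ht)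
  isPeriodicPt_of_mem := hb.isPeriodicPt_of_mem
  norm_iterate_lt t ht k hk := by
    rw [show (b.smul c).point = c • b.point from rfl, iterate_map_smul_of_linear, norm_smul]
    exact (mul_le_of_le_one_left (norm_nonneg _) hc).trans_lt (hb.norm_iterate_lt t ht k hk)

theorem Shadows.smul {S : X →L[𝕜] X} {v : X} {c : 𝕜} (hb : b.Shadows S α ε v) (hc : ‖c‖ ≤ 1) :
    (b.smul c).Shadows S α ε (c • v) := fun m hm => by
  rw [show (b.smul c).point = c • b.point from rfl, iterate_map_smul_of_linear,
    iterate_map_smul_of_linear, ← smul_sub, norm_smul]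
  exact (mul_le_of_le_one_left (norm_nonneg _) hc).trans_lt (hb m hm)

theorem Precedes.smul (h : a.Precedes T q b) (c c' : 𝕜) : (a.smul c).Precedes T q (b.smul c') :=
  ⟨h.1, fun t ht => isPeriodicPt_smul c (h.2 t ht)⟩

end Bump

theorem exists_forall_norm_iterate_lt (T : ℕ → X →L[𝕜] X) (q K : ℕ) {ε : ℝ} (hε : 0 < ε) :
    ∃ δ > 0, ∀ u, ‖u‖ < δ → ∀ t ≤ q, ∀ j ≤ K, ‖(T t)^[j] u‖ < ε := by
  have hnear : ∀ᶠ u in 𝓝 (0 : X), ∀ t ∈ Set.Iic q, ∀ j ∈ Set.Iic K, ‖(T t)^[j] u‖ < ε := by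
    refine (eventually_all_finite (Set.finite_Iic q)).2 fun t _ =>
      (eventually_all_finite (Set.finite_Iic K)).2 fun j _ => ?_
    have hcont : Continuous fun u => ‖(T t)^[j] u‖ := ((T t).continuous.iterate j).norm
    exact hcont.continuousAt.eventually_lt_const (by simpa [iterate_map_zero] using hε)
  obtain ⟨δ, hδ, hball⟩ := Metric.eventually_nhds_iff.1 hnear
  exact ⟨δ, hδ, fun u hu => hball (by simpa using hu)⟩

namespace PeriodicApproximation

variable {T : ℕ → X →L[𝕜] X} {X₀ : Submodule 𝕜 X} {α ε : ℝ} {s q : ℕ}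

theorem iterate_mem (H : PeriodicApproximation T X₀ α) (t k : ℕ) {x : X} (hx : x ∈ X₀) :
    (T t)^[k] x ∈ X₀ :=
  Set.MapsTo.iterate (H.map_mem t) k hx

theorem exists_approx_finset (H : PeriodicApproximation T X₀ α) (hs : s ≤ q) (hε : 0 < ε) (K : ℕ)
    (A : Finset X) (hA : ∀ x ∈ A, x ∈ X₀) {v : X} (hv : v ∈ X₀) :
    ∃ b : Bump X, b.margin = K ∧ b.IsAdmissible T X₀ α q ε A K ∧
      ∀ k : ℕ, (k : ℝ) ≤ α * b.period + K →
        ‖(T s)^[b.start + k] b.point - (T s)^[k] v‖ < ε := by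
  obtain ⟨y, hyX, hy⟩ := exists_mem_forall_isPeriodicPt (fun t : Set.Iic q => T t) X₀
    (fun t => H.mem_periodicPts t) A hA
  obtain ⟨δ, hδ, hclose⟩ := exists_forall_norm_iterate_lt T q K hε
  obtain ⟨z, hzX, n, d, hd, hz, hfollow⟩ := H.exists_approx s q δ hδ v hv y hyX
  have hL : 0 ≤ α * d := mul_nonneg H.pos.le d.cast_nonneg
  refine ⟨⟨z, n, d, K⟩, rfl, ⟨hzX, hd, le_rfl, fun t ht => (hz t ht).2.1,
    fun t ht => hy ⟨t, ht⟩ d (hz t ht).1, fun t ht k hk => ?_⟩, fun k hk => ?_⟩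
  · obtain ⟨j, hj, i, hi, rfl⟩ := exists_eq_add_of_le_add_natCast hL hk
    rw [Function.iterate_add_apply]
    exact hclose _ ((hz t ht).2.2 i hi) t ht j hj
  · obtain ⟨j, hj, i, hi, rfl⟩ := exists_eq_add_of_le_add_natCast hL hk
    rw [add_left_comm, Function.iterate_add_apply _ j, Function.iterate_add_apply _ j,
      ← iterate_map_sub]
    exact hclose _ (hfollow i hi) s hs j hj

theorem exists_bump (H : PeriodicApproximation T X₀ α) (hs : s ≤ q) (hε : 0 < ε) (K : ℕ)
    (A : Finset X) (hA : ∀ x ∈ A, x ∈ X₀) {v : X} (hv : v ∈ X₀) {p : ℕ} (hp : 0 < p)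
    (hvp : Function.IsPeriodicPt (T s) p v) :
    ∃ b : Bump X, b.IsAdmissible T X₀ α q ε A K ∧
      ∃ r : Fin p, b.Shadows (T s) α ε ((T s)^[r] v) := by
  classical
  obtain ⟨b, rfl, hb, hfollow⟩ := H.exists_approx_finset hs hε K (insert v A)
    (Finset.forall_mem_insert _ _ _ |>.2 ⟨hv, hA⟩) hv
  obtain ⟨r, hr, hnr⟩ := exists_lt_iterate_add_eq hp hvp b.start
  refine ⟨b, ⟨hb.mem, hb.period_pos, le_rfl, hb.isPeriodicPt,
    fun t ht x hx => hb.isPeriodicPt_of_mem t ht x (Finset.mem_insert_of_mem hx),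
    hb.norm_iterate_lt⟩, ⟨r, hr⟩, ?_⟩
  rintro m ⟨k, hk, hmk⟩
  have hvm : (T s)^[m] ((T s)^[r] v) = (T s)^[k] v := by
    have hvd := hb.isPeriodicPt_of_mem s hs v (Finset.mem_insert_self v A)
    calc (T s)^[m] ((T s)^[r] v) = (T s)^[b.start + k] ((T s)^[r] v) :=
          iterate_eq_of_modEq (hvd.apply_iterate r) hmk
      _ = (T s)^[k] ((T s)^[b.start + r] v) := by
          rw [← Function.iterate_add_apply, ← Function.iterate_add_apply, add_assoc,
            add_left_comm]
      _ = (T s)^[k] v := by rw [hnr]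
  rw [hvm, iterate_eq_of_modEq (hb.isPeriodicPt s hs) hmk]
  exact hfollow k hk

theorem exists_bump_preceded (H : PeriodicApproximation T X₀ α) (hs : s ≤ q) (hε : 0 < ε) (K : ℕ)
    (A : Finset X) (hA : ∀ x ∈ A, x ∈ X₀) {B : Set (Bump X)} (hB : B.Finite)
    (hBX : ∀ a ∈ B, a.point ∈ X₀) {v : X} (hv : v ∈ X₀) {p : ℕ} (hp : 0 < p)
    (hvp : Function.IsPeriodicPt (T s) p v) :
    ∃ b : Bump X, b.IsAdmissible T X₀ α q ε A K ∧ (∀ a ∈ B, a.Precedes T q b) ∧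
      ∃ r : Fin p, b.Shadows (T s) α ε ((T s)^[r] v) := by
  classical
  obtain ⟨B, rfl⟩ := hB.exists_finset_coe
  let N := B.sup fun a => 2 * max a.margin a.period
  have hABX : ∀ x ∈ A ∪ B.image Bump.point, x ∈ X₀ := fun x hx => by
    rcases Finset.mem_union.1 hx with hx | hx
    · exact hA x hx
    · obtain ⟨a, ha, rfl⟩ := Finset.mem_image.1 hx
      exact hBX a ha
  obtain ⟨b, hb, hshadow⟩ := H.exists_bump hs hε (max K (N + 1)) (A ∪ B.image Bump.point) hABX hv
    hp hvp
  refine ⟨b, ⟨hb.mem, hb.period_pos, (le_max_left _ _).trans hb.le_margin, hb.isPeriodicPt,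
    fun t ht x hx => hb.isPeriodicPt_of_mem t ht x (Finset.mem_union_left _ hx),
    hb.norm_iterate_lt⟩, fun a ha => ⟨?_, fun t ht => ?_⟩, hshadow⟩
  · have haN : 2 * max a.margin a.period ≤ N :=
      Finset.le_sup (f := fun a : Bump X => 2 * max a.margin a.period) ha
    exact (Nat.lt_succ_of_le haN).trans_le ((le_max_right _ _).trans hb.le_margin)
  · exact hb.isPeriodicPt_of_mem t ht _
      (Finset.mem_union_right _ (Finset.mem_image_of_mem Bump.point ha))

theorem exists_seq_bump (H : PeriodicApproximation T X₀ α) (hs : s ≤ q) (hε : 0 < ε) (K : ℕ)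
    (A : Finset X) (hA : ∀ x ∈ A, x ∈ X₀) {p : ℕ} (hp : 0 < p) {C : Type*} [Finite C] {V : C → X}
    (hV : ∀ c, V c ∈ X₀) (hVp : ∀ c, Function.IsPeriodicPt (T s) p (V c)) :
    ∃ (b : ℕ → C → Bump X) (r : ℕ → C → Fin p),
      (∀ i c, (b i c).IsAdmissible T X₀ α q ε A K ∧
        (b i c).Shadows (T s) α ε ((T s)^[r i c] (V c))) ∧
      ∀ i j, i < j → ∀ c c', (b i c).Precedes T q (b j c') := by
  obtain ⟨β, hβ, hprec⟩ := exists_seq_of_forall_finset_exists (α := C → Bump X × Fin p)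
    (fun β => ∀ c, (β c).1.IsAdmissible T X₀ α q ε A K ∧
      (β c).1.Shadows (T s) α ε ((T s)^[(β c).2] (V c)))
    (fun β β' => ∀ c c', (β c).1.Precedes T q (β' c').1) (fun σ hσ => by
      have hfin : {b | ∃ β ∈ σ, ∃ c, (β c).1 = b}.Finite := by
        refine (σ.finite_toSet.biUnion fun β _ => Set.finite_range fun c => (β c).1).subset ?_
        rintro b ⟨β, hβ, c, rfl⟩
        exact Set.mem_biUnion hβ (Set.mem_range_self c)
      have hfinX : ∀ b ∈ {b | ∃ β ∈ σ, ∃ c, (β c).1 = b}, b.point ∈ X₀ := by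
        rintro b ⟨β, hβ, c, rfl⟩
        exact (hσ β hβ c).1.mem
      choose b hb hprec r hshadow using fun c => H.exists_bump_preceded hs hε K A hA hfin hfinX
        (hV c) hp (hVp c)
      exact ⟨fun c => (b c, r c), fun c => ⟨hb c, hshadow c⟩,
        fun β hβ c c' => hprec c' _ ⟨β, hβ, c, rfl⟩⟩)
  exact ⟨fun i c => (β i c).1, fun i c => (β i c).2, hβ, hprec⟩

-- Among infinitely many rounds, each with a bump for every family of coefficients in a finite set,
-- two have the same shifts; so the two bumps can be ordered by `Precedes` as well.
theorem exists_bump_pair_shadows_orbitSum (H : PeriodicApproximation T X₀ α) (hs : s ≤ q)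
    (hε : 0 < ε) (K : ℕ) (A : Finset X) (hA : ∀ x ∈ A, x ∈ X₀) {g : X} (hg : g ∈ X₀)
    {p : ℕ} (hp : 0 < p) (hgp : Function.IsPeriodicPt (T s) p g) :
    ∃ (r : Fin p) (c c' : Fin p → 𝕜) (b b' : Bump X),
      1 ≤ ‖c r - c' r‖ ∧ (∀ a ≠ r, c a = c' a) ∧
      b.IsAdmissible T X₀ α q ε A K ∧ b'.IsAdmissible T X₀ α q ε A K ∧ b.Precedes T q b' ∧
      b.Shadows (T s) α ε ((T s)^[r] (orbitSum (T s) g c)) ∧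
      b'.Shadows (T s) α ε ((T s)^[r] (orbitSum (T s) g c')) := by
  obtain ⟨γ, hγ⟩ := exists_seq_one_le_norm_sub 𝕜
  obtain ⟨b, shift, hb, hprec⟩ := H.exists_seq_bump hs hε K A hA hp
    (V := fun c : Fin p → Fin (p + 1) => orbitSum (T s) g fun a => γ (c a))
    (fun c => X₀.sum_mem fun _ _ => X₀.smul_mem _ (H.iterate_mem s _ hg))
    (fun c => isPeriodicPt_orbitSum hgp _)
  obtain ⟨i, j, hij, heq⟩ : ∃ i j, i < j ∧ shift i = shift j := by
    obtain ⟨i, j, hij, heq⟩ := Finite.exists_ne_map_eq_of_infinite shift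
    rcases hij.lt_or_gt with h | h
    · exact ⟨i, j, h, heq⟩
    · exact ⟨j, i, h, heq.symm⟩
  obtain ⟨r, c, c', hne, hcr, hcr', hoff⟩ := exists_ne_eq_off_of_card_lt
    (by simp) (shift i)
  have hr : c r ≠ c' r := fun h => hne (funext fun a =>
    (eq_or_ne a r).elim (fun ha => ha ▸ h) (hoff a))
  refine ⟨r, fun a => γ (c a), fun a => γ (c' a), b i c, b j c', hγ (Fin.val_injective.ne hr),
    fun a ha => congrArg (fun k : Fin (p + 1) => γ k) (hoff a ha), (hb i c).1, (hb j c').1,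
    hprec i j hij c c', ?_, ?_⟩
  · exact hcr ▸ (hb i c).2
  · exact hcr' ▸ heq ▸ (hb j c').2

theorem exists_bump_pair (H : PeriodicApproximation T X₀ α) (hs : s ≤ q) (hε : 0 < ε) (K : ℕ)
    (A : Finset X) (hA : ∀ x ∈ A, x ∈ X₀) {g : X} (hg : g ∈ X₀) :
    ∃ b b' : Bump X, b.IsAdmissible T X₀ α q ε A K ∧ b'.IsAdmissible T X₀ α q ε A K ∧
      b.Precedes T q b' ∧ ∀ m ∈ b.window α ∩ b'.window α,
        ‖(T s)^[m] (b.point + b'.point) - (T s)^[m] g‖ < 2 * ε := by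
  obtain ⟨p, hp, hgp⟩ := H.mem_periodicPts s g hg
  obtain ⟨r, c, c', b, b', hsep, hoff, hb, hb', hprec, hshadow, hshadow'⟩ :=
    H.exists_bump_pair_shadows_orbitSum hs hε K A hA hg hp hgp
  set l := (c r - c' r)⁻¹ with hl
  have hl1 : ‖l‖ ≤ 1 := by
    rw [hl, norm_inv]
    exact inv_le_one_of_one_le₀ hsep
  have hl1' : ‖-l‖ ≤ 1 := by rwa [norm_neg]
  have hg_eq : g = l • (T s)^[r] (orbitSum (T s) g c) +
      (-l) • (T s)^[r] (orbitSum (T s) g c') := by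
    rw [neg_smul, ← sub_eq_add_neg, ← smul_sub, iterate_orbitSum_sub hgp hoff,
      inv_smul_smul₀ (norm_pos_iff.1 (by linarith))]
  refine ⟨b.smul l, b'.smul (-l), hb.smul hl1, hb'.smul hl1', hprec.smul _ _, fun m hm => ?_⟩
  have hfirst := hshadow.smul hl1 m hm.1
  have hsecond := hshadow'.smul hl1' m hm.2
  conv in (T s)^[m] g => rw [hg_eq]
  rw [iterate_map_add, iterate_map_add, add_sub_add_comm, two_mul]
  exact (norm_add_le _ _).trans_lt (add_lt_add hfirst hsecond)

theorem denseAtScale_visits_add_add (H : PeriodicApproximation T X₀ α) (hs : s ≤ q) {w x : X}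
    {A : Finset X} (hwA : w ∈ A) (hxA : x ∈ A) {K : ℕ} {b b' : Bump X} {δ : ℝ}
    (hb : b.IsAdmissible T X₀ α q ε A K) (hb' : b'.IsAdmissible T X₀ α q ε A K)
    (hprec : b.Precedes T q b') (hx : Function.minimalPeriod (T s) x ≤ K)
    (hfollow : ∀ m ∈ b.window α ∩ b'.window α,
      ‖(T s)^[m] (b.point + b'.point) - (T s)^[m] (x - w)‖ < δ) :
    DenseAtScale (visits (T s) (w + b.point + b'.point) x δ)
      (α * (α * (1 / Function.minimalPeriod (T s) x))) (max b'.margin b'.period) := by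
  set π := Function.minimalPeriod (T s) x
  have hα := H.pos
  have hπ : 0 < π := (hb.isPeriodicPt_of_mem s hs x hxA).minimalPeriod_pos hb.period_pos
  have hπd : π ∣ b.period := (hb.isPeriodicPt_of_mem s hs x hxA).minimalPeriod_dvd
  have hwindow : Function.Periodic (· ∈ {m | π ∣ m} ∩ b.window α) b.period := fun m => by
    have hdvd : π ∣ m + b.period ↔ π ∣ m := Nat.dvd_add_left hπd
    simp [Bump.window, periodicWindow, Nat.ModEq, hdvd]
  have hfirst : DenseAtScale ({m | π ∣ m} ∩ b.window α) (α * (1 / π)) (max b.margin b.period) :=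
    ((denseAtScale_dvd hπ).mono_scale (by positivity)
      (hx.trans hb.le_margin)).of_inter_periodicWindow (by positivity) hα.le H.lt_one.le
        hb.period_pos hwindow subset_rfl
  have hper : Function.IsPeriodicPt (T s) b'.period (w + b.point + b'.point) :=
    isPeriodicPt_add (isPeriodicPt_add (hb'.isPeriodicPt_of_mem s hs w hwA) (hprec.2 s hs))
      (hb'.isPeriodicPt s hs)
  refine (hfirst.mono_scale (by positivity) (by have := hprec.1; omega)).of_inter_periodicWindow
    (n := b'.start) (by positivity) hα.le H.lt_one.le hb'.period_pos (visits_periodic hper x δ) ?_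
  rintro m ⟨⟨hmπ, hm⟩, hm'⟩
  have hxm : (T s)^[m] x = x :=
    (Function.isPeriodicPt_iff_minimalPeriod_dvd.2 hmπ).eq
  have hclose := hfollow m ⟨hm, hm'⟩
  rwa [iterate_map_sub, hxm, sub_sub_eq_add_sub, ← iterate_map_add, ← dist_eq_norm, add_comm,
    ← add_assoc] at hclose

theorem exists_refinement (H : PeriodicApproximation T X₀ α) (hs : s ≤ q) (hε : 0 < ε)
    {a : Stage X} (ha : a.point ∈ X₀) {x : X} (hx : x ∈ X₀) :
    ∃ b : Stage X, b.point ∈ X₀ ∧ IsRefinement T q ε (α / 2 * (α / 2)) a b ∧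
      DenseAtScale (visits (T s) b.point x ε)
        (α * (α * (1 / Function.minimalPeriod (T s) x))) b.scale := by
  classical
  have hα := H.pos
  obtain ⟨b, b', hb, hb', hprec, hfollow⟩ := H.exists_bump_pair hs (half_pos hε)
    (2 * a.scale + 1 + Function.minimalPeriod (T s) x) {a.point, x} (by simp [ha, hx])
    (X₀.sub_mem hx ha)
  rw [mul_div_cancel₀ ε two_ne_zero] at hfollow
  have haA : a.point ∈ ({a.point, x} : Finset X) := by simp
  have hfirst : IsRefinement T q (ε / 2) (α / 2) a ⟨a.point + b.point, max b.margin b.period⟩ :=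
    isRefinement_add hα.le H.lt_one.le hb.period_pos (by have := hb.le_margin; omega)
      (fun t ht => hb.isPeriodicPt_of_mem t ht _ haA) hb.isPeriodicPt hb.norm_iterate_lt
  have hsecond : IsRefinement T q (ε / 2) (α / 2) ⟨a.point + b.point, max b.margin b.period⟩
      ⟨a.point + b.point + b'.point, max b'.margin b'.period⟩ :=
    isRefinement_add hα.le H.lt_one.le hb'.period_pos hprec.1
      (fun t ht => isPeriodicPt_add (hb'.isPeriodicPt_of_mem t ht _ haA) (hprec.2 t ht))
      hb'.isPeriodicPt hb'.norm_iterate_lt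
  refine ⟨⟨a.point + b.point + b'.point, max b'.margin b'.period⟩,
    X₀.add_mem (X₀.add_mem ha hb.mem) hb'.mem, ?_,
    H.denseAtScale_visits_add_add hs haA (by simp) hb hb' hprec (by omega) hfollow⟩
  simpa only [add_halves] using hfirst.trans hsecond (by positivity)

theorem exists_chain (H : PeriodicApproximation T X₀ α) {σ : ℕ → ℕ} (hσ : ∀ i, σ i ≤ i)
    {y : ℕ → X} (hy : ∀ i, y i ∈ X₀) :
    ∃ p : ℕ → Stage X, ∀ i, IsRefinement T i ((1 / 2) ^ i) (α / 2 * (α / 2)) (p i) (p (i + 1)) ∧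
      DenseAtScale (visits (T (σ i)) (p (i + 1)).point (y i) ((1 / 2) ^ i))
        (α * (α * (1 / Function.minimalPeriod (T (σ i)) (y i)))) (p (i + 1)).scale := by
  obtain ⟨p, hp⟩ := exists_seq_rel_succ (α := {a : Stage X // a.point ∈ X₀})
    (R := fun i a b => IsRefinement T i ((1 / 2) ^ i) (α / 2 * (α / 2)) a.1 b.1 ∧
      DenseAtScale (visits (T (σ i)) b.1.point (y i) ((1 / 2) ^ i))
        (α * (α * (1 / Function.minimalPeriod (T (σ i)) (y i)))) b.1.scale)
    (fun i a => by
      obtain ⟨b, hbX, hb⟩ :=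
        H.exists_refinement (hσ i) (ε := (1 / 2) ^ i) (by positivity) a.2 (hy i)
      exact ⟨⟨b, hbX⟩, hb⟩) ⟨⟨0, 0⟩, X₀.zero_mem⟩
  exact ⟨fun i => p i, hp⟩

end PeriodicApproximation

end criterion

theorem exists_le_lt_succ_of_strictMono {K : ℕ → ℕ} (hK : StrictMono K) {a N : ℕ} (hN : K a ≤ N) :
    ∃ i ≥ a, K i ≤ N ∧ N < K (i + 1) := by
  have hcover : N ∈ ⋃ i ∈ Set.Ici a, Set.Ico (K i) (K (Order.succ i)) := by
    rw [biUnion_Ici_Ico_map_succ (fun i hi => hK.monotone hi)]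
    · exact hN
    · exact Set.Infinite.not_bddAbove ((Set.Ici_infinite a).image hK.injective.injOn)
  simpa [and_left_comm] using hcover

section limit

variable {X F : Type*} [PseudoMetricSpace X] [FunLike F X X] {T : ℕ → F} {p : ℕ → Stage X}
  {κ β ρ : ℝ}

theorem prefixDense_visits_limit (hp : ∀ i, IsRefinement T i ((1 / 2) ^ i) κ (p i) (p (i + 1)))
    (hκ0 : 0 ≤ κ) (hκ1 : κ ≤ 1) (hT : ∀ t, Continuous (T t)) {u : X}
    (hu : Tendsto (fun i => (p i).point) atTop (𝓝 u)) {t G a₀ : ℕ} (hβ : 0 ≤ β) {x : X}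
    (hreturn : ∀ m, ∃ a, m ≤ a ∧ a < m + G ∧ t ≤ a + 1 ∧
      DenseAtScale (visits (T t) (p (a + 1)).point x ((1 / 2) ^ a)) β (p (a + 1)).scale)
    (hρ : 3 * (1 / 2) ^ a₀ ≤ ρ) :
    PrefixDense (visits (T t) u x ρ) (κ ^ (G + 1) * (β / 2)) (p (a₀ + G + 1)).scale := by
  intro N hN
  have hmono := strictMono_scale_of_isRefinement hp
  obtain ⟨i, hi, hiN, hNi⟩ := exists_le_lt_succ_of_strictMono hmono hN
  obtain ⟨a, hma, haG, hta, hdense⟩ := hreturn (i - 1 - G)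
  have hprefix : 2 * (p (a + 1)).scale ≤ N := calc
    2 * (p (a + 1)).scale ≤ (p (a + 2)).scale := (hp (a + 1)).two_mul_scale_lt.le
    _ ≤ (p i).scale := hmono.monotone (by omega)
    _ ≤ N := hiN
  have hscale : N ≤ (p (a + 1 + (i - a))).scale := by
    rw [show a + 1 + (i - a) = i + 1 by omega]
    exact hNi.le
  have hradius : (1 / 2 : ℝ) ^ a + 4 * (1 / 2) ^ (a + 1) ≤ ρ := calc
    (1 / 2 : ℝ) ^ a + 4 * (1 / 2) ^ (a + 1) = 3 * (1 / 2) ^ a := by ring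
    _ ≤ 3 * (1 / 2) ^ a₀ := by
      gcongr 3 * ?_
      exact pow_le_pow_of_le_one (by norm_num) (by norm_num) (by omega)
    _ ≤ ρ := hρ
  calc κ ^ (G + 1) * (β / 2) * N ≤ κ ^ (i - a) * (β / 2) * N := by
        gcongr ?_ * (β / 2) * N
        exact pow_le_pow_of_le_one hκ0 hκ1 (by omega)
    _ ≤ windowCount (visits (T t) u x ((1 / 2) ^ a + 4 * (1 / 2) ^ (a + 1))) 0 N :=
        windowCount_visits_limit hp hκ0 hT hu hta hβ hdense hprefix hscale
    _ ≤ windowCount (visits (T t) u x ρ) 0 N :=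
        windowCount_le_of_forall fun _ _ hk => hk.trans_le hradius

end limit

theorem PeriodicApproximation.exists_forall_lowerDensity_pos {𝕜 X : Type*}
    [NontriviallyNormedField 𝕜] [SeminormedAddCommGroup X] [NormedSpace 𝕜 X] [CompleteSpace X]
    [TopologicalSpace.SeparableSpace X] {T : ℕ → X →L[𝕜] X} {X₀ : Submodule 𝕜 X} {α : ℝ}
    (H : PeriodicApproximation T X₀ α) (hX₀ : Dense (X₀ : Set X)) :
    ∃ u : X, ∀ s, ∀ U : Set X, IsOpen U → U.Nonempty → 0 < lowerDensity {n | (T s)^[n] u ∈ U} := by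
  obtain ⟨r, hr, hreturn⟩ := exists_syndetic_schedule
  let y : ℕ → X₀ := TopologicalSpace.denseSeq X₀
  have hy : DenseRange fun l => (y l : X) :=
    hX₀.denseRange_val.comp (TopologicalSpace.denseRange_denseSeq X₀) continuous_subtype_val
  have hσ : ∀ i, (Nat.unpair (r i)).1 ≤ i := fun i => (Nat.unpair_left_le _).trans (hr i)
  obtain ⟨p, hp⟩ := H.exists_chain hσ (y := fun i => y (Nat.unpair (r i)).2) fun i => (y _).2
  have href := fun i => (hp i).1
  obtain ⟨u, hu⟩ := cauchySeq_tendsto_of_complete (cauchySeq_point_of_isRefinement href)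
  refine ⟨u, fun s U hU hUne => ?_⟩
  obtain ⟨l, hl⟩ := hy.exists_mem_open hU hUne
  obtain ⟨ρ, hρ, hball⟩ := Metric.isOpen_iff.1 hU _ hl
  obtain ⟨a₀, ha₀⟩ : ∃ a₀ : ℕ, 3 * (1 / 2 : ℝ) ^ a₀ ≤ ρ := by
    obtain ⟨a₀, ha₀⟩ := exists_pow_lt_of_lt_one (div_pos hρ three_pos) (one_half_lt_one (α := ℝ))
    exact ⟨a₀, by linarith⟩
  obtain ⟨G, hG⟩ := hreturn (Nat.pair s l)
  have hα := H.pos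
  have hπ := Function.minimalPeriod_pos_of_mem_periodicPts (H.mem_periodicPts s _ (y l).2)
  have hκ1 : α / 2 * (α / 2) ≤ 1 := by nlinarith [H.lt_one]
  have hdense := prefixDense_visits_limit href (by positivity) hκ1 (fun t => (T t).continuous) hu
    (t := s) (x := y l) (β := α * (α * (1 / Function.minimalPeriod (T s) (y l)))) (G := G)
    (by positivity) (fun m => by
      obtain ⟨a, hma, haG, hra⟩ := hG m
      have hs : s ≤ a := (Nat.left_le_pair s l).trans (hra.symm.trans_le (hr a))
      have hhit := (hp a).2
      rw [hra, Nat.unpair_pair] at hhit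
      exact ⟨a, hma, haG, hs.trans a.le_succ, hhit⟩) ha₀
  exact lowerDensity_pos_of_prefixDense (by positivity) (hdense.mono_set fun m hm => hball hm)

/-- Theorem 3.1 (common frequent hypercyclicity criterion via periodic points).
The period `p_T(x)` of a periodic point is `Function.minimalPeriod ⇑T x`. -/
theorem stmt14 {𝕜 X : Type*} [NontriviallyNormedField 𝕜]
    [NormedAddCommGroup X] [NormedSpace 𝕜 X]
    [CompleteSpace X] [TopologicalSpace.SeparableSpace X]
    (T : ℕ → X →L[𝕜] X)
    (X₀ : Submodule 𝕜 X) (hX₀ : Dense (X₀ : Set X))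
    (hinv : ∀ s : ℕ, ∀ x ∈ X₀, T s x ∈ X₀)
    (hper : ∀ s : ℕ, ∀ x ∈ X₀, ∃ m : ℕ, 0 < m ∧ ((T s) ^ m) x = x)
    (α : ℝ) (hα0 : 0 < α) (hα1 : α < 1)
    (hmain : ∀ s q : ℕ, ∀ ε : ℝ, 0 < ε → ∀ x ∈ X₀, ∀ y ∈ X₀,
      ∃ z ∈ X₀, ∃ n d : ℕ, 1 ≤ n ∧ 1 ≤ d ∧ ∀ t : ℕ, t ≤ q →
        -- (1) d is a multiple of p_{T_t}(y) and of p_{T_t}(z)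
        (Function.minimalPeriod ⇑(T t) y ∣ d ∧
          Function.minimalPeriod ⇑(T t) z ∣ d) ∧
        -- (2) ‖T_t^k(z)‖ < ε for 0 ≤ k ≤ αd
        (∀ k : ℕ, (k : ℝ) ≤ α * d → ‖((T t) ^ k) z‖ < ε) ∧
        -- (3) ‖T_s^{n+k}(z) − T_s^k(x)‖ < ε for 0 ≤ k ≤ αd
        (∀ k : ℕ, (k : ℝ) ≤ α * d → ‖((T s) ^ (n + k)) z - ((T s) ^ k) x‖ < ε)) :
    ∃ x : X, ∀ s : ℕ, ∀ U : Set X, IsOpen U → U.Nonempty →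
      0 < lowerDensity {n : ℕ | ((T s) ^ n) x ∈ U} := by
  simp only [FunLike.coe_pow_eq_iterate] at hper hmain ⊢
  have H : PeriodicApproximation T X₀ α := by
    refine ⟨hα0, hα1, hinv, hper, fun s q ε hε x hx y hy => ?_⟩
    obtain ⟨z, hz, n, d, -, hd, h⟩ := hmain s q ε hε x hx y hy
    refine ⟨z, hz, n, d, hd, fun t ht => ?_, (h 0 q.zero_le).2.2⟩
    obtain ⟨⟨hy, hz⟩, hsmall, -⟩ := h t ht
    exact ⟨Function.isPeriodicPt_iff_minimalPeriod_dvd.2 hy,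
      Function.isPeriodicPt_iff_minimalPeriod_dvd.2 hz, hsmall⟩
  exact H.exists_forall_lowerDensity_pos hX₀
end

section
/- Let X be a Banach space, Y a separable Banach space, and 𝒯 = (T_n)_{n∈ℕ} a sequence of bounded linear operators from X to Y satisfying the Frequent Universality Criterion: there exist a dense subset Y₀ ⊆ Y and mappings S_n : Y₀ → X such that for every y ∈ Y₀: (1) the series ∑_{0≤n≤m} T_m(S_{m−n}(y)) converges unconditionally, uniformly for m ∈ ℕ; (2) the series ∑_{n≥0} T_m(S_{m+n}(y)) converges unconditionally, uniformly for m ∈ ℕ; (3) the series ∑_{n≥0} S_n(y) converges unconditionally; (4) T_n(S_n(y)) → y as n → ∞. Let 𝒟 denote the set of all completely admissible sequences α such that α ≲ 𝒟_s for some s ∈ ℕ, where 𝒟_s = (exp(k/log_{(s)}(k)))_{k≥k₀} (k₀ large enough so that the iterated logarithm is defined and positive), log_{(s)} is the s-fold iterated logarithm with log_{(0)}(x) = x, and α ≲ β means that the sequence (α_k/β_k) is non-increasing from some index on. Then ⋂_{α∈𝒟} FU_α(𝒯) ≠ ∅, i.e. there exists x ∈ X which is α-frequently universal for 𝒯 for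 every α ∈ 𝒟. -/
open Filter Topology

/-- A sequence `α = (α_k)_{k ≥ 1}` is completely admissible: non-negative,
non-decreasing, with divergent series, and `α_n / ∑_{j=1}^n α_j → 0`. -/
def CompletelyAdmissible (α : ℕ → ℝ) : Prop :=
  (∀ k, 0 ≤ α k) ∧ (∀ k l : ℕ, k ≤ l → α k ≤ α l) ∧
    Filter.Tendsto (fun n : ℕ => ∑ k ∈ Finset.Icc 1 n, α k) Filter.atTop Filter.atTop ∧
    Filter.Tendsto (fun n : ℕ => α n / ∑ k ∈ Finset.Icc 1 n, α k) Filter.atTop (nhds 0)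

/-- The lower `α`-density of `E ⊆ ℕ`. -/
noncomputable def alphaLowerDensity (α : ℕ → ℝ) (E : Set ℕ) : ℝ :=
  Filter.liminf (fun n : ℕ =>
    (∑ k ∈ Finset.Icc 1 n, Set.indicator E α k) / ∑ k ∈ Finset.Icc 1 n, α k)
    Filter.atTop

/-- The sequence `𝒟_s = (exp(k / log_{(s)} k))_k`, where `log_{(s)}` is the `s`-fold
iterated logarithm (with `log_{(0)} x = x`). -/
noncomputable def Dseq (s : ℕ) : ℕ → ℝ :=
  fun k => Real.exp ((k : ℝ) / (Real.log^[s] (k : ℝ)))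

/-- `α ≲ β`: the sequence `(α_k / β_k)` is non-increasing from some index on. -/
def Lesssim (α β : ℕ → ℝ) : Prop :=
  ∃ k₀ : ℕ, ∀ k l : ℕ, k₀ ≤ k → k ≤ l → α l / β l ≤ α k / β k

/-- A family of series `∑_{n ∈ R i} f i n` in a normed space converges unconditionally,
uniformly for `i : ι`. -/
def UnifUncondConv {ι X : Type*} [SeminormedAddCommGroup X]
    (f : ι → ℕ → X) (R : ι → Set ℕ) : Prop :=
  ∀ ε : ℝ, 0 < ε → ∃ N : ℕ, ∀ i : ι, ∀ F : Finset ℕ,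
    (∀ n ∈ F, N ≤ n ∧ n ∈ R i) → ‖∑ n ∈ F, f i n‖ < ε

/-!
The universal vector is `x = ∑ j, ∑ n ∈ E j, S n (y j)`. Every nonempty open subset of `Y` contains
one of the balls around `y p` whose radii tend to zero with `p`, and the sets `E j` are so well
separated that the four conditions of the criterion leave only the term `T m (S m (y p)) ≈ y p`
in `T m x` for `m ∈ E p`.

It remains to choose `E` independently of the weight `α`, with all lower `α`-densities positive.
Let `E p` consist of the multiples of a period `P p`, minus those near a multiple of a larger
period `P q`. As `α` is non-decreasing, the multiples of `P p` carry about `1 / P p` of the total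
mass at least. Conversely, a `P q`-separated set carries at most `2 / P q` of it as soon as `α` at
most doubles over windows of length `P q`, because disjoint windows can be put below its points.
So for rapidly increasing periods only a small proportion is removed. Each `𝒟_s`, hence each
`α ≲ 𝒟_s`, eventually has this doubling property for every fixed window length; a diagonal choice
of the thresholds beyond which the period `P q` becomes active serves all `s` simultaneously.
-/

section Mass

variable {α : ℕ → ℝ}

/-- The `α`-mass of the part of `E` lying in `{1, …, n}`, the numerator in the definition of
the lower `α`-density. -/
noncomputable def mass (α : ℕ → ℝ) (E : Set ℕ) (n : ℕ) : ℝ :=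
  ∑ k ∈ Finset.Icc 1 n, E.indicator α k

theorem mass_eq_sum_filter (E : Set ℕ) [DecidablePred (· ∈ E)] (n : ℕ) :
    mass α E n = ∑ k ∈ Finset.Icc 1 n with k ∈ E, α k := by
  simp only [mass, Finset.sum_filter, Set.indicator_apply]

theorem mass_mono (hα : ∀ k, 0 ≤ α k) {E F : Set ℕ} {n : ℕ} (h : ∀ k ∈ E, k ≤ n → k ∈ F) :
    mass α E n ≤ mass α F n := by
  classical
  rw [mass_eq_sum_filter, mass_eq_sum_filter]
  refine Finset.sum_le_sum_of_subset_of_nonneg (fun k hk => ?_) fun k _ _ => hα k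
  rw [Finset.mem_filter, Finset.mem_Icc] at hk ⊢
  exact ⟨hk.1, h k hk.2 hk.1.2⟩

theorem mass_le_sum (hα : ∀ k, 0 ≤ α k) (E : Set ℕ) (n : ℕ) :
    mass α E n ≤ ∑ k ∈ Finset.Icc 1 n, α k :=
  Finset.sum_le_sum fun k _ => Set.indicator_le_self' (fun k _ => hα k) k

theorem mass_union_le (hα : ∀ k, 0 ≤ α k) (E F : Set ℕ) (n : ℕ) :
    mass α (E ∪ F) n ≤ mass α E n + mass α F n := by
  rw [mass, mass, mass, ← Finset.sum_add_distrib]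
  refine Finset.sum_le_sum fun k _ => ?_
  rw [← Set.indicator_union_add_inter_apply]
  exact le_add_of_nonneg_right (Set.indicator_nonneg (fun k _ => hα k) k)

theorem mass_biUnion_le (hα : ∀ k, 0 ≤ α k) {ι : Type*} (s : Finset ι) (E : ι → Set ℕ) (n : ℕ) :
    mass α (⋃ i ∈ s, E i) n ≤ ∑ i ∈ s, mass α (E i) n := by
  classical
  induction s using Finset.induction_on with
  | empty => simp [mass]
  | insert i s hi ih =>
    rw [Finset.set_biUnion_insert, Finset.sum_insert hi]
    exact (mass_union_le hα _ _ n).trans (add_le_add_right ih _)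

theorem mass_Iio_le (hα : ∀ k, 0 ≤ α k) (m n : ℕ) :
    mass α (Set.Iio m) n ≤ ∑ k ∈ Finset.range m, α k := by
  classical
  rw [mass_eq_sum_filter]
  refine Finset.sum_le_sum_of_subset_of_nonneg (fun k hk => ?_) fun k _ _ => hα k
  exact Finset.mem_range.2 (Finset.mem_filter.1 hk).2

theorem isCoboundedUnder_mass_div_sum (hα : ∀ k, 0 ≤ α k) (E : Set ℕ) :
    IsCoboundedUnder (· ≥ ·) atTop fun n => mass α E n / ∑ k ∈ Finset.Icc 1 n, α k :=
  (isBoundedUnder_of ⟨1, fun n => div_le_one_of_le₀ (mass_le_sum hα E n)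
    (Finset.sum_nonneg fun k _ => hα k)⟩).isCoboundedUnder_ge

theorem alphaLowerDensity_mono (hα : ∀ k, 0 ≤ α k) {E F : Set ℕ} (h : E ⊆ F) :
    alphaLowerDensity α E ≤ alphaLowerDensity α F := by
  have hsum (n : ℕ) : 0 ≤ ∑ k ∈ Finset.Icc 1 n, α k := Finset.sum_nonneg fun k _ => hα k
  have hmass (n : ℕ) : 0 ≤ mass α E n :=
    Finset.sum_nonneg fun k _ => Set.indicator_nonneg (fun k _ => hα k) k
  exact liminf_le_liminf
    (Eventually.of_forall fun n =>
      div_le_div_of_nonneg_right (mass_mono hα fun k hk _ => h hk) (hsum n))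
    (isBoundedUnder_of ⟨0, fun n => div_nonneg (hmass n) (hsum n)⟩)
    (isCoboundedUnder_mass_div_sum hα F)

theorem CompletelyAdmissible.alphaLowerDensity_pos (hα : CompletelyAdmissible α) {E : Set ℕ}
    {C : ℝ} (hC : 0 < C) (h : ∀ᶠ n in atTop, ∑ k ∈ Finset.Icc 1 n, α k ≤ C * mass α E n) :
    0 < alphaLowerDensity α E := by
  refine (inv_pos.2 hC).trans_le
    (le_liminf_of_le (isCoboundedUnder_mass_div_sum hα.1 E) ?_)
  filter_upwards [h, hα.2.2.1.eventually_gt_atTop 0] with n hn hpos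
  change C⁻¹ ≤ mass α E n / _
  rwa [le_div_iff₀ hpos, inv_mul_le_iff₀ hC]

theorem sum_le_mul_mass_dvd (hα : ∀ k, 0 ≤ α k) (hmono : Monotone α) {P : ℕ} (hP : 0 < P)
    (n : ℕ) :
    ∑ k ∈ Finset.Icc 1 n, α k ≤ P * mass α {k | P ∣ k} n + P * α n := by
  suffices h : ∑ k ∈ Finset.Icc 1 n, α k ≤ P * mass α {k | P ∣ k} n + (n % P : ℕ) * α n by
    have hmod : ((n % P : ℕ) : ℝ) ≤ P := by exact_mod_cast (Nat.mod_lt n hP).le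
    exact h.trans (add_le_add_right (mul_le_mul_of_nonneg_right hmod (hα n)) _)
  induction n with
  | zero => simp [mass]
  | succ n ih =>
    have hstep : α n ≤ α (n + 1) := hmono n.le_succ
    have hr : ((n % P : ℕ) : ℝ) * α n ≤ (n % P : ℕ) * α (n + 1) := by gcongr
    rw [mass, Finset.sum_Icc_succ_top (by omega), Finset.sum_Icc_succ_top (by omega), ← mass]
    have hmod : (n + 1) % P = (n % P + 1) % P := (Nat.mod_add_mod n P 1).symm
    rcases (Nat.succ_le_of_lt (Nat.mod_lt n hP)).eq_or_lt with hlast | hlt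
    · have hdvd : P ∣ n + 1 :=
        Nat.dvd_of_mod_eq_zero (by rw [hmod, ← Nat.succ_eq_add_one, hlast, Nat.mod_self])
      have hcast : (P : ℝ) = (n % P : ℕ) + 1 := by exact_mod_cast hlast.symm
      rw [Set.indicator_of_mem (show n + 1 ∈ {k | P ∣ k} from hdvd),
        Nat.mod_eq_zero_of_dvd hdvd, mul_add, hcast, Nat.cast_zero]
      rw [hcast] at ih
      linarith
    · have hndvd : ¬ P ∣ n + 1 := fun hdvd => by
        rw [Nat.mod_eq_of_lt hlt, Nat.mod_eq_zero_of_dvd hdvd] at hmod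
        omega
      rw [Set.indicator_of_notMem (show n + 1 ∉ {k | P ∣ k} from hndvd), hmod,
        Nat.mod_eq_of_lt hlt]
      push_cast
      linarith

theorem mul_mass_le_of_pairwise_dist (hα : ∀ k, 0 ≤ α k) (hmono : Monotone α) {P : ℕ} {c : ℝ}
    (hc : 0 ≤ c) {E : Set ℕ} (hE : E.Pairwise fun k l => P ≤ Nat.dist k l)
    (hgrowth : ∀ k ∈ E, P ≤ k ∧ α k ≤ c * α (k - P)) (n : ℕ) :
    P * mass α E n ≤ c * ∑ k ∈ Finset.Icc 1 n, α k := by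
  classical
  set D := {k ∈ Finset.Icc 1 n | k ∈ E}
  have hD {k : ℕ} (hk : k ∈ D) : (1 ≤ k ∧ k ≤ n) ∧ k ∈ E := by simpa [D] using hk
  have hwindow : ∀ k ∈ D, P * α k ≤ ∑ j ∈ Finset.Ioc (k - P) k, c * α j := fun k hk => by
    obtain ⟨hPk, hαk⟩ := hgrowth k (hD hk).2
    have hcard := Finset.card_nsmul_le_sum (Finset.Ioc (k - P) k) (fun j => c * α j) (α k)
      fun j hj => hαk.trans <|
        mul_le_mul_of_nonneg_left (hmono (Finset.mem_Ioc.1 hj).1.le) hc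
    rwa [Nat.card_Ioc, Nat.sub_sub_self hPk, nsmul_eq_mul] at hcard
  have hdisj : (D : Set ℕ).PairwiseDisjoint fun k => Finset.Ioc (k - P) k := fun k hk l hl hkl => by
    have hdist : P ≤ Nat.dist k l := hE (hD hk).2 (hD hl).2 hkl
    refine Finset.disjoint_left.2 fun j hjk hjl => ?_
    rw [Finset.mem_Ioc] at hjk hjl
    rw [Nat.dist] at hdist
    omega
  have hsub : D.biUnion (fun k => Finset.Ioc (k - P) k) ⊆ Finset.Icc 1 n := fun j hj => by
    obtain ⟨k, hk, hjk⟩ := Finset.mem_biUnion.1 hj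
    have hkn := (hD hk).1
    rw [Finset.mem_Ioc] at hjk
    rw [Finset.mem_Icc]
    omega
  calc P * mass α E n = ∑ k ∈ D, P * α k := by rw [mass_eq_sum_filter, Finset.mul_sum]
    _ ≤ ∑ k ∈ D, ∑ j ∈ Finset.Ioc (k - P) k, c * α j := Finset.sum_le_sum hwindow
    _ = ∑ j ∈ D.biUnion fun k => Finset.Ioc (k - P) k, c * α j :=
      (Finset.sum_biUnion hdisj).symm
    _ ≤ ∑ j ∈ Finset.Icc 1 n, c * α j :=
      Finset.sum_le_sum_of_subset_of_nonneg hsub fun j _ _ => mul_nonneg hc (hα j)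
    _ = c * ∑ k ∈ Finset.Icc 1 n, α k := (Finset.mul_sum ..).symm

/-- The natural numbers at distance less than `N` from some multiple of `P`; they have to be
avoided by the points that must stay away from the multiples of `P`. -/
def nearMultiples (P N : ℕ) : Set ℕ :=
  {k | ∃ m, P ∣ m ∧ Nat.dist k m < N}

theorem le_dist_of_modEq {P k l : ℕ} (h : k ≡ l [MOD P]) (hne : k ≠ l) : P ≤ Nat.dist k l := by
  wlog hkl : k ≤ l generalizing k l
  · rw [Nat.dist_comm]
    exact this h.symm hne.symm (le_of_not_ge hkl)
  rw [Nat.dist_eq_sub_of_le hkl]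
  exact Nat.le_of_dvd (by omega) ((Nat.modEq_iff_dvd' hkl).1 h)

theorem nearMultiples_subset_biUnion_modEq (P N : ℕ) :
    nearMultiples P N ⊆ ⋃ d ∈ Finset.range (2 * N), {k | k + N ≡ d [MOD P]} := by
  rintro k ⟨m, hm, hkm⟩
  rw [Nat.dist] at hkm
  refine Set.mem_biUnion (Finset.mem_coe.2 (Finset.mem_range.2
    (show k + N - m < 2 * N by omega))) ?_
  change k + N ≡ k + N - m [MOD P]
  rw [Nat.ModEq.comm, Nat.modEq_iff_dvd' (by omega), Nat.sub_sub_self (by omega)]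
  exact hm

theorem mul_mass_nearMultiples_inter_le (hα : ∀ k, 0 ≤ α k) (hmono : Monotone α) {P : ℕ}
    {c : ℝ} (hc : 0 ≤ c) {G : Set ℕ} (hG : ∀ k ∈ G, P ≤ k ∧ α k ≤ c * α (k - P)) (N n : ℕ) :
    P * mass α (nearMultiples P N ∩ G) n ≤ 2 * N * (c * ∑ k ∈ Finset.Icc 1 n, α k) := by
  set R : ℕ → Set ℕ := fun d => {k | k + N ≡ d [MOD P]} ∩ G
  have hcover : nearMultiples P N ∩ G ⊆ ⋃ d ∈ Finset.range (2 * N), R d := by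
    simp only [R, ← Set.iUnion_inter]
    exact Set.inter_subset_inter_left G (nearMultiples_subset_biUnion_modEq P N)
  have hsep (d : ℕ) : (R d).Pairwise fun k l => P ≤ Nat.dist k l := fun k hk l hl hkl =>
    le_dist_of_modEq ((hk.1.trans hl.1.symm).add_right_cancel' N) hkl
  calc P * mass α (nearMultiples P N ∩ G) n
      ≤ P * ∑ d ∈ Finset.range (2 * N), mass α (R d) n := by
        gcongr
        exact (mass_mono hα fun k hk _ => hcover hk).trans (mass_biUnion_le hα _ R n)
    _ = ∑ d ∈ Finset.range (2 * N), P * mass α (R d) n := Finset.mul_sum ..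
    _ ≤ ∑ _d ∈ Finset.range (2 * N), c * ∑ k ∈ Finset.Icc 1 n, α k :=
      Finset.sum_le_sum fun d _ =>
        mul_mass_le_of_pairwise_dist hα hmono hc (hsep d) (fun k hk => hG k hk.2) n
    _ = 2 * N * (c * ∑ k ∈ Finset.Icc 1 n, α k) := by simp

end Mass

/-- The period of the `p`-th set in the separated family with gaps `N`: the periods grow so
fast that the multiples of `period N p` lost near the multiples of some `period N q`, `q > p`,
form only a small proportion of all of them. -/
def period (N : ℕ → ℕ) (p : ℕ) : ℕ :=
  ∏ r ∈ Finset.range (p + 1), 32 * 2 ^ r * N r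

section Family

variable {α : ℕ → ℝ} {N : ℕ → ℕ}

theorem period_pos (hN : ∀ q, 0 < N q) (p : ℕ) : 0 < period N p :=
  Finset.prod_pos fun r _ => by have := hN r; positivity

theorem le_period (hN : ∀ q, 0 < N q) (p : ℕ) : N p ≤ period N p :=
  Nat.le_of_dvd (period_pos hN p) <|
    (Dvd.intro_left _ rfl).trans (Finset.dvd_prod_of_mem _ (Finset.self_mem_range_succ p))

theorem mul_period_le (hN : ∀ q, 0 < N q) {p q : ℕ} (hpq : p < q) :
    32 * 2 ^ q * N q * period N p ≤ period N q := by
  refine Nat.le_of_dvd (period_pos hN q) ?_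
  rw [period, period, Finset.prod_range_succ _ q, mul_comm]
  exact mul_dvd_mul_right
    (Finset.prod_dvd_prod_of_subset _ _ _ (Finset.range_subset_range.2 hpq)) _

/-- Distinct pairs `(p, k)`, `(q, l)` with `k ∈ E p` and `l ∈ E q` satisfy
`|k - l| ≥ N (max p q)`, and `E p` starts at `N p` or later. -/
structure IsSeparatedFamily_s19 (N : ℕ → ℕ) (E : ℕ → Set ℕ) : Prop where
  le_of_mem : ∀ {p k}, k ∈ E p → N p ≤ k
  le_dist : ∀ {p q k l}, k ∈ E p → l ∈ E q → (p, k) ≠ (q, l) → N (max p q) ≤ Nat.dist k l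

/-- The multiples of `period N p` beyond `t p + N p` that are not close to a multiple of a
larger period `period N q`, a condition that becomes active only beyond the threshold `t q`. -/
def sparseMultiples (N t : ℕ → ℕ) (p : ℕ) : Set ℕ :=
  {k | t p + N p ≤ k ∧ period N p ∣ k ∧
    ∀ q, p < q → t q ≤ k → k ∉ nearMultiples (period N q) (N q)}

theorem isSeparatedFamily_sparseMultiples (hN : ∀ q, 0 < N q) (t : ℕ → ℕ) :
    IsSeparatedFamily_s19 N (sparseMultiples N t) where
  le_of_mem hk := (Nat.le_add_left _ _).trans hk.1
  le_dist {p q k l} hk hl hne := by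
    wlog hpq : p ≤ q generalizing p q k l
    · rw [max_comm, Nat.dist_comm]
      exact this hl hk hne.symm (le_of_not_ge hpq)
    rw [max_eq_right hpq]
    rcases hpq.eq_or_lt with rfl | hlt
    · have hmod : k ≡ l [MOD period N p] :=
        (Nat.modEq_zero_iff_dvd.2 hk.2.1).trans (Nat.modEq_zero_iff_dvd.2 hl.2.1).symm
      exact (le_period hN p).trans (le_dist_of_modEq hmod fun h => hne (by rw [h]))
    · rcases le_or_gt (t q) k with htk | hkt
      · exact not_lt.1 fun h => hk.2.2 q hlt htk ⟨l, hl.2.1, h⟩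
      · have hl' := hl.1
        rw [Nat.dist]
        omega

theorem mass_dvd_le_add_sum (hα : ∀ k, 0 ≤ α k) {t : ℕ → ℕ} {m : ℕ}
    (hm : ∀ k, m ≤ k → ∀ q, t q ≤ k → q ≤ k) (p n : ℕ) :
    mass α {k | period N p ∣ k} n ≤ mass α (sparseMultiples N t p) n +
      ∑ k ∈ Finset.range (max m (t p + N p)), α k +
      ∑ q ∈ Finset.Ioc p n,
        mass α (nearMultiples (period N q) (N q) ∩ {k | m ≤ k ∧ t q ≤ k}) n := by
  set B : ℕ → Set ℕ := fun q =>
    nearMultiples (period N q) (N q) ∩ {k | m ≤ k ∧ t q ≤ k}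
  set n₀ := max m (t p + N p)
  have hcover : ∀ k ∈ {k | period N p ∣ k}, k ≤ n →
      k ∈ sparseMultiples N t p ∪ Set.Iio n₀ ∪ ⋃ q ∈ Finset.Ioc p n, B q := by
    intro k hdvd hkn
    rcases lt_or_ge k n₀ with hlt | hge
    · exact Or.inl (Or.inr hlt)
    · obtain ⟨hmk, htk⟩ := max_le_iff.1 hge
      by_cases hbad : ∃ q, p < q ∧ t q ≤ k ∧ k ∈ nearMultiples (period N q) (N q)
      · obtain ⟨q, hpq, htq, hnear⟩ := hbad
        have hq : q ∈ Finset.Ioc p n := Finset.mem_Ioc.2 ⟨hpq, (hm k hmk q htq).trans hkn⟩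
        exact Or.inr (Set.mem_biUnion (Finset.mem_coe.2 hq) ⟨hnear, hmk, htq⟩)
      · exact Or.inl (Or.inl ⟨htk, hdvd, fun q hpq htq hnear => hbad ⟨q, hpq, htq, hnear⟩⟩)
  calc mass α {k | period N p ∣ k} n
      ≤ mass α (sparseMultiples N t p ∪ Set.Iio n₀ ∪ ⋃ q ∈ Finset.Ioc p n, B q) n :=
        mass_mono hα hcover
    _ ≤ mass α (sparseMultiples N t p) n + mass α (Set.Iio n₀) n +
        mass α (⋃ q ∈ Finset.Ioc p n, B q) n :=
        (mass_union_le hα _ _ n).trans (add_le_add_left (mass_union_le hα _ _ n) _)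
    _ ≤ _ := by
        gcongr
        · exact mass_Iio_le hα n₀ n
        · exact mass_biUnion_le hα _ B n

theorem period_mul_sum_mass_le (hN : ∀ q, 0 < N q) (hα : ∀ k, 0 ≤ α k) (hmono : Monotone α)
    {G : ℕ → Set ℕ} (hG : ∀ q, ∀ k ∈ G q, period N q ≤ k ∧ α k ≤ 2 * α (k - period N q))
    (p n : ℕ) :
    period N p * ∑ q ∈ Finset.Ioc p n, mass α (nearMultiples (period N q) (N q) ∩ G q) n ≤
      (∑ k ∈ Finset.Icc 1 n, α k) / 4 := by
  set A := ∑ k ∈ Finset.Icc 1 n, α k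
  have hA : 0 ≤ A := Finset.sum_nonneg fun k _ => hα k
  have hterm : ∀ q ∈ Finset.Ioc p n,
      period N p * mass α (nearMultiples (period N q) (N q) ∩ G q) n ≤ A / 8 * (1 / 2) ^ q := by
    intro q hq
    have hpos : (0 : ℝ) < period N q := by exact_mod_cast period_pos hN q
    have hgrow : 32 * 2 ^ q * N q * period N p ≤ (period N q : ℝ) := by
      exact_mod_cast mul_period_le hN (Finset.mem_Ioc.1 hq).1
    have hnear := mul_mass_nearMultiples_inter_le hα hmono zero_le_two (hG q) (N q) n
    refine le_of_mul_le_mul_left ?_ hpos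
    calc period N q * (period N p * mass α (nearMultiples (period N q) (N q) ∩ G q) n)
        = period N p * (period N q * mass α (nearMultiples (period N q) (N q) ∩ G q) n) := by
          ring
      _ ≤ period N p * (2 * N q * (2 * A)) := by gcongr
      _ = 32 * 2 ^ q * N q * period N p * (A / 8 * (1 / 2) ^ q) := by
          rw [one_div, inv_pow]; field_simp; ring
      _ ≤ period N q * (A / 8 * (1 / 2) ^ q) := by gcongr
  calc period N p * ∑ q ∈ Finset.Ioc p n, mass α (nearMultiples (period N q) (N q) ∩ G q) n
      ≤ ∑ q ∈ Finset.Ioc p n, A / 8 * (1 / 2) ^ q := by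
        rw [Finset.mul_sum]
        exact Finset.sum_le_sum hterm
    _ = A / 8 * ∑ q ∈ Finset.Ioc p n, (1 / 2) ^ q := (Finset.mul_sum ..).symm
    _ ≤ A / 8 * 2 := by
        gcongr
        exact sum_le_hasSum _ (fun q _ => by positivity) hasSum_geometric_two
    _ = A / 4 := by ring

theorem CompletelyAdmissible.alphaLowerDensity_sparseMultiples_pos
    (hα : CompletelyAdmissible α) (hN : ∀ q, 0 < N q) {t : ℕ → ℕ}
    (ht : ∀ᶠ k in atTop, ∀ q, t q ≤ k →
      q ≤ k ∧ period N q ≤ k ∧ α k ≤ 2 * α (k - period N q)) (p : ℕ) :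
    0 < alphaLowerDensity α (sparseMultiples N t p) := by
  have hα₀ := hα.1
  have hmono : Monotone α := fun k l => hα.2.1 k l
  have hP : (0 : ℝ) < period N p := by exact_mod_cast period_pos hN p
  obtain ⟨m, hm⟩ := eventually_atTop.1 ht
  set C := ∑ k ∈ Finset.range (max m (t p + N p)), α k
  refine hα.alphaLowerDensity_pos (C := 4 * period N p) (by positivity) ?_
  filter_upwards [hα.2.2.1.eventually_gt_atTop 0,
    hα.2.2.1.eventually_ge_atTop (4 * (period N p * C)),
    hα.2.2.2.eventually_le_const (show (0 : ℝ) < 1 / (4 * period N p) by positivity)]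
    with n hpos hhead hlast
  have hmultiples := sum_le_mul_mass_dvd hα₀ hmono (period_pos hN p) n
  have hsplit := mul_le_mul_of_nonneg_left
    (mass_dvd_le_add_sum (N := N) hα₀ (fun k hk q htq => (hm k hk q htq).1) p n) hP.le
  have hnear := period_mul_sum_mass_le (G := fun q => {k | m ≤ k ∧ t q ≤ k}) hN hα₀ hmono
    (fun q k hk => (hm k hk.1 q hk.2).2) p n
  rw [div_le_div_iff₀ hpos (by positivity)] at hlast
  linarith

end Family

/-- Slow growth of a weight sequence: over any window of fixed length it eventually at most
doubles. The condition concerns large `k` only, so the truncation of `k - P` does not matter. -/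
def HasSlowGrowth (β : ℕ → ℝ) : Prop :=
  ∀ P : ℕ, ∀ᶠ k in atTop, β k ≤ 2 * β (k - P)

theorem tendsto_iterate_log_atTop (s : ℕ) : Tendsto Real.log^[s] atTop atTop := by
  induction s with
  | zero => exact tendsto_id
  | succ s ih =>
    rw [Function.iterate_succ']
    exact Real.tendsto_log_atTop.comp ih

theorem eventually_iterate_log_le_iterate_log (s : ℕ) :
    ∀ᶠ x : ℝ in atTop, ∀ y, x ≤ y → Real.log^[s] x ≤ Real.log^[s] y := by
  induction s with
  | zero => exact Eventually.of_forall fun x y hxy => hxy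
  | succ s ih =>
    filter_upwards [ih, (tendsto_iterate_log_atTop s).eventually_gt_atTop 0] with x hx hpos y hxy
    simp only [Function.iterate_succ_apply']
    exact Real.log_le_log hpos (hx y hxy)

theorem hasSlowGrowth_Dseq (s : ℕ) : HasSlowGrowth (Dseq s) := fun P => by
  set L : ℕ → ℝ := fun k => Real.log^[s] k
  have hL : Tendsto L atTop atTop := (tendsto_iterate_log_atTop s).comp tendsto_natCast_atTop_atTop
  have hshift : Tendsto (fun k => k - P) atTop atTop := tendsto_sub_atTop_nat P
  filter_upwards [eventually_ge_atTop P, (hL.comp hshift).eventually_gt_atTop 0,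
    hL.eventually_gt_atTop 0, hL.eventually_ge_atTop (P / Real.log 2),
    (tendsto_natCast_atTop_atTop.comp hshift).eventually (eventually_iterate_log_le_iterate_log s)]
    with k hPk hpos hpos' hlarge hmono
  have hle : L (k - P) ≤ L k := hmono k (Nat.cast_le.2 (Nat.sub_le k P))
  have hwindow : P / L k ≤ Real.log 2 := div_le_comm₀ (Real.log_pos one_lt_two) hpos' |>.1 hlarge
  have hexponent : k / L k ≤ Real.log 2 + (k - P : ℕ) / L (k - P) :=
    calc k / L k = P / L k + (k - P : ℕ) / L k := by
          rw [← add_div, ← Nat.cast_add, Nat.add_sub_of_le hPk]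
      _ ≤ Real.log 2 + (k - P : ℕ) / L (k - P) := add_le_add hwindow (by gcongr)
  calc Dseq s k ≤ Real.exp (Real.log 2 + (k - P : ℕ) / L (k - P)) := Real.exp_le_exp.2 hexponent
    _ = 2 * Dseq s (k - P) := by rw [Real.exp_add, Real.exp_log two_pos, Dseq]

theorem Lesssim.eventually_le_mul {α β : ℕ → ℝ} (h : Lesssim α β) (hα : ∀ k, 0 ≤ α k)
    (hβ : ∀ k, 0 < β k) (c : ℝ) :
    ∀ᶠ k in atTop, ∀ j, j ≤ k → k ≤ 2 * j → β k ≤ c * β j → α k ≤ c * α j := by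
  obtain ⟨k₀, hk₀⟩ := h
  filter_upwards [eventually_ge_atTop (2 * k₀)] with k hk j hjk hkj hβkj
  have hratio := (div_le_div_iff₀ (hβ k) (hβ j)).1 (hk₀ j k (by omega) hjk)
  refine le_of_mul_le_mul_right ?_ (hβ j)
  calc α k * β j ≤ α j * β k := hratio
    _ ≤ α j * (c * β j) := mul_le_mul_of_nonneg_left hβkj (hα j)
    _ = c * α j * β j := by ring

theorem exists_threshold_forall_eventually {ι : Type*} [Countable ι] {p : ι → ℕ → ℕ → Prop}
    (h : ∀ i q, ∀ᶠ k in atTop, p i q k) :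
    ∃ t : ℕ → ℕ, ∀ i, ∀ᶠ k in atTop, ∀ q, t q ≤ k → p i q k := by
  obtain ⟨e, he⟩ := exists_injective_nat ι
  have hbounded (q : ℕ) : {i | e i ≤ q}.Finite := (Set.finite_Iic q).preimage he.injOn
  choose t ht using fun q =>
    eventually_atTop.1 ((eventually_all_finite (hbounded q)).2 fun i _ => h i q)
  refine ⟨t, fun i => ?_⟩
  filter_upwards [(eventually_all_finite (Set.finite_Iio (e i))).2 fun q _ => h i q]
    with k hk q hqk
  rcases lt_or_ge q (e i) with hlt | hge
  · exact hk q hlt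
  · exact ht q k hqk i hge

theorem exists_isSeparatedFamily_alphaLowerDensity_pos {ι : Type*} [Countable ι]
    {β : ι → ℕ → ℝ} (hpos : ∀ i k, 0 < β i k) (hβ : ∀ i, HasSlowGrowth (β i))
    {N : ℕ → ℕ} (hN : ∀ q, 0 < N q) :
    ∃ E : ℕ → Set ℕ, IsSeparatedFamily_s19 N E ∧ ∀ α, CompletelyAdmissible α →
      (∃ i, Lesssim α (β i)) → ∀ p, 0 < alphaLowerDensity α (E p) := by
  obtain ⟨t, ht⟩ := exists_threshold_forall_eventually
    (p := fun i q k => q ≤ k ∧ 2 * period N q ≤ k ∧ β i k ≤ 2 * β i (k - period N q))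
    fun i q => (eventually_ge_atTop q).and
      ((eventually_ge_atTop (2 * period N q)).and (hβ i (period N q)))
  refine ⟨sparseMultiples N t, isSeparatedFamily_sparseMultiples hN t, ?_⟩
  rintro α hα ⟨i, hαβ⟩ p
  refine hα.alphaLowerDensity_sparseMultiples_pos hN ?_ p
  filter_upwards [ht i, hαβ.eventually_le_mul hα.1 (hpos i) 2] with k hk hdouble q hqk
  obtain ⟨hq, hperiod, hβk⟩ := hk q hqk
  exact ⟨hq, by omega, hdouble _ (Nat.sub_le _ _) (by omega) hβk⟩

theorem UnifUncondConv.eventually {ι X : Type*} [SeminormedAddCommGroup X] {f : ι → ℕ → X}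
    {R : ι → Set ℕ} (h : UnifUncondConv f R) {ε : ℝ} (hε : 0 < ε) :
    ∀ᶠ K in atTop, ∀ i, ∀ F : Finset ℕ, (∀ n ∈ F, K ≤ n ∧ n ∈ R i) → ‖∑ n ∈ F, f i n‖ < ε := by
  obtain ⟨N, hN⟩ := h ε hε
  filter_upwards [eventually_ge_atTop N] with K hK i F hF
  exact hN i F fun n hn => ⟨hK.trans (hF n hn).1, (hF n hn).2⟩

theorem UnifUncondConv.summable_indicator {ι X : Type*} [NormedAddCommGroup X] [CompleteSpace X]
    {f : ι → ℕ → X} {R : ι → Set ℕ} (h : UnifUncondConv f R) (i : ι) :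
    Summable ((R i).indicator (f i)) := by
  classical
  refine summable_iff_vanishing_norm.2 fun ε hε => ?_
  obtain ⟨N, hN⟩ := h ε hε
  refine ⟨Finset.range N, fun F hF => ?_⟩
  simp only [Set.indicator_apply, ← Finset.sum_filter]
  refine hN i _ fun n hn => ?_
  obtain ⟨hnF, hnR⟩ := Finset.mem_filter.1 hn
  exact ⟨not_lt.1 fun hlt => Finset.disjoint_left.1 hF hnF (Finset.mem_range.2 hlt), hnR⟩

theorem norm_sub_le_of_hasSum {ι E : Type*} [SeminormedAddCommGroup E] {f : ι → E} {a : E}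
    (hf : HasSum f a) (i : ι) {C : ℝ} (h : ∀ F : Finset ι, i ∉ F → ‖∑ j ∈ F, f j‖ ≤ C) :
    ‖a - f i‖ ≤ C := by
  classical
  have hlim : Tendsto (fun F : Finset ι => ‖∑ j ∈ F, f j - f i‖) atTop (𝓝 ‖a - f i‖) :=
    (Tendsto.sub_const hf (f i)).norm
  refine le_of_tendsto hlim ?_
  filter_upwards [eventually_ge_atTop {i}] with F hF
  rw [← Finset.sum_erase_add F f (Finset.singleton_subset_iff.1 hF), add_sub_cancel_right]
  exact h _ (Finset.notMem_erase i F)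

section Universality

variable {𝕜 X Y : Type*} [NormedField 𝕜] [NormedAddCommGroup X] [NormedSpace 𝕜 X]
  [NormedAddCommGroup Y] [NormedSpace 𝕜 Y]

/-- Quantitative form, beyond the index `K` and up to the error `ε`, of the four conditions of
the Frequent Universality Criterion for one vector `y`, with `u n` in the role of `S_n y`. The
series in the first two conditions are indexed by the subscript of `u`. -/
structure TailBound (T : ℕ → X →L[𝕜] Y) (u : ℕ → X) (y : Y) (ε : ℝ) (K : ℕ) : Prop where
  norm_sum_left_le : ∀ m, ∀ F : Finset ℕ, (∀ n ∈ F, n + K ≤ m) → ‖∑ n ∈ F, T m (u n)‖ ≤ ε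
  norm_sum_right_le : ∀ m, ∀ F : Finset ℕ, (∀ n ∈ F, m + K ≤ n) → ‖∑ n ∈ F, T m (u n)‖ ≤ ε
  norm_sum_le : ∀ F : Finset ℕ, (∀ n ∈ F, K ≤ n) → ‖∑ n ∈ F, u n‖ ≤ ε
  norm_apply_sub_le : ∀ n, K ≤ n → ‖T n (u n) - y‖ ≤ ε

variable {T : ℕ → X →L[𝕜] Y}

theorem eventually_tailBound {u : ℕ → X} {y : Y}
    (h1 : UnifUncondConv (fun m n => T m (u (m - n))) fun m => {n | n ≤ m})
    (h2 : UnifUncondConv (fun m n => T m (u (m + n))) fun _ => Set.univ)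
    (h3 : UnifUncondConv (fun _ : Unit => u) fun _ => Set.univ)
    (h4 : Tendsto (fun n => T n (u n)) atTop (𝓝 y)) {ε : ℝ} (hε : 0 < ε) :
    ∀ᶠ K in atTop, TailBound T u y ε K := by
  filter_upwards [h1.eventually hε, h2.eventually hε, h3.eventually hε,
    eventually_forall_ge_atTop.2 (h4.eventually (Metric.closedBall_mem_nhds y hε))]
    with K hleft hright hsum happrox
  refine ⟨fun m F hF => ?_, fun m F hF => ?_, fun F hF => ?_, fun n hn => ?_⟩
  · have hreindex : ∑ n ∈ F, T m (u n) = ∑ n ∈ F.image (m - ·), T m (u (m - n)) := by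
      rw [Finset.sum_image fun a ha b hb hab => by have := hF a ha; have := hF b hb; omega]
      exact Finset.sum_congr rfl fun n hn => by
        rw [Nat.sub_sub_self (by have := hF n hn; omega)]
    rw [hreindex]
    refine (hleft m _ (Finset.forall_mem_image.2 fun n hn => ?_)).le
    exact ⟨Nat.le_sub_of_add_le' (hF n hn), Nat.sub_le m n⟩
  · have hreindex : ∑ n ∈ F, T m (u n) = ∑ n ∈ F.image (· - m), T m (u (m + n)) := by
      rw [Finset.sum_image fun a ha b hb hab => by have := hF a ha; have := hF b hb; omega]
      exact Finset.sum_congr rfl fun n hn => by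
        rw [Nat.add_sub_of_le (by have := hF n hn; omega)]
    rw [hreindex]
    refine (hright m _ (Finset.forall_mem_image.2 fun n hn => ?_)).le
    exact ⟨Nat.le_sub_of_add_le' (hF n hn), trivial⟩
  · exact (hsum () F fun n hn => ⟨hF n hn, trivial⟩).le
  · exact mem_closedBall_iff_norm.1 (happrox n hn)

theorem TailBound.norm_tsum_indicator_le {u : ℕ → X} {y : Y} {ε : ℝ} {K : ℕ}
    (h : TailBound T u y ε K) {E : Set ℕ} (hsum : Summable (E.indicator u))
    (hE : ∀ n ∈ E, K ≤ n) : ‖∑' n, E.indicator u n‖ ≤ ε := by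
  classical
  refine le_of_tendsto' hsum.hasSum.norm fun F => ?_
  simp only [Set.indicator_apply, ← Finset.sum_filter]
  exact h.norm_sum_le _ fun n hn => hE n (Finset.mem_filter.1 hn).2

theorem TailBound.norm_sum_le_two_mul {u : ℕ → X} {y : Y} {ε : ℝ} {K : ℕ}
    (h : TailBound T u y ε K) (m : ℕ) {F : Finset ℕ} (hF : ∀ n ∈ F, K ≤ Nat.dist n m) :
    ‖∑ n ∈ F, T m (u n)‖ ≤ 2 * ε := by
  rw [← Finset.sum_filter_add_sum_filter_not F (· < m), two_mul]
  refine norm_add_le_of_le (h.norm_sum_left_le m _ fun n hn => ?_)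
    (h.norm_sum_right_le m _ fun n hn => ?_)
  all_goals
    obtain ⟨hnF, hnm⟩ := Finset.mem_filter.1 hn
    have hdist := hF n hnF
    rw [Nat.dist] at hdist
    omega

theorem TailBound.norm_apply_tsum_sub_le {u : ℕ → X} {y : Y} {ε : ℝ} {K : ℕ}
    (h : TailBound T u y ε K) {E : Set ℕ} (hsum : Summable (E.indicator u)) {m : ℕ}
    (hE : ∀ n ∈ E, n ≠ m → K ≤ Nat.dist n m) :
    ‖T m (∑' n, E.indicator u n) - T m (E.indicator u m)‖ ≤ 2 * ε := by
  classical
  refine norm_sub_le_of_hasSum ((T m).hasSum hsum.hasSum) m fun F hmF => ?_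
  have hfilter : ∑ n ∈ F, T m (E.indicator u n) = ∑ n ∈ F with n ∈ E, T m (u n) := by
    simp only [Finset.sum_filter, Set.indicator_apply, apply_ite (T m), map_zero]
  rw [hfilter]
  refine h.norm_sum_le_two_mul m fun n hn => ?_
  obtain ⟨hnF, hnE⟩ := Finset.mem_filter.1 hn
  exact hE n hnE (ne_of_mem_of_not_mem hnF hmF)

theorem IsSeparatedFamily_s19.exists_norm_apply_sub_le [CompleteSpace X] {N : ℕ → ℕ}
    {E : ℕ → Set ℕ} (hE : IsSeparatedFamily_s19 N E) (hN : ∀ q, 0 < N q) {u : ℕ → ℕ → X}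
    (hu : ∀ j, Summable (u j)) {y : ℕ → Y}
    (htail : ∀ q, ∀ j ≤ q, TailBound T (u j) (y j) ((1 / 4) ^ q) (N q)) :
    ∃ x : X, ∀ p, ∀ m ∈ E p, ‖T m x - y p‖ ≤ 5 * (1 / 2) ^ p := by
  have hsum (j : ℕ) : Summable ((E j).indicator (u j)) := (hu j).indicator (E j)
  have hquarter (q : ℕ) : (1 / 4 : ℝ) ^ q = (1 / 2) ^ q * (1 / 2) ^ q := by
    rw [← mul_pow]; norm_num
  have hhalf (q : ℕ) : (1 / 4 : ℝ) ^ q ≤ (1 / 2) ^ q := by gcongr; norm_num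
  set w : ℕ → X := fun j => ∑' n, (E j).indicator (u j) n
  have hw : Summable w := Summable.of_norm_bounded summable_geometric_two fun j =>
    ((htail j j le_rfl).norm_tsum_indicator_le (hsum j) fun n hn => hE.le_of_mem hn).trans (hhalf j)
  refine ⟨∑' j, w j, fun p m hm => ?_⟩
  have herr (j : ℕ) :
      ‖T m (w j) - T m ((E j).indicator (u j) m)‖ ≤ 2 * (1 / 2) ^ p * (1 / 2) ^ j := by
    refine ((htail (max j p) j (le_max_left j p)).norm_apply_tsum_sub_le (hsum j)
      fun n hn hnm => hE.le_dist hn hm fun h => hnm (congrArg Prod.snd h)).trans ?_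
    rw [hquarter, mul_assoc]
    gcongr 2 * (?_ * ?_)
    · exact pow_le_pow_of_le_one (by norm_num) (by norm_num) (le_max_right j p)
    · exact pow_le_pow_of_le_one (by norm_num) (by norm_num) (le_max_left j p)
  have hdiag : HasSum (fun j => T m ((E j).indicator (u j) m)) (T m (u p m)) := by
    have hoff : ∀ j, j ≠ p → T m ((E j).indicator (u j) m) = 0 := fun j hj => by
      have hmj : m ∉ E j := fun hmj => by
        have hdist := hE.le_dist hmj hm fun h => hj (congrArg Prod.fst h)
        rw [Nat.dist_self] at hdist
        exact (hN _).not_ge hdist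
      rw [Set.indicator_of_notMem hmj, map_zero]
    simpa only [Set.indicator_of_mem hm] using hasSum_single p hoff
  have hmain : ‖T m (∑' j, w j) - T m (u p m)‖ ≤ 2 * (1 / 2) ^ p * 2 := by
    rw [← (((T m).hasSum hw.hasSum).sub hdiag).tsum_eq]
    exact tsum_of_norm_bounded (hasSum_geometric_two.mul_left _) herr
  calc ‖T m (∑' j, w j) - y p‖
      ≤ ‖T m (∑' j, w j) - T m (u p m)‖ + ‖T m (u p m) - y p‖ :=
        norm_sub_le_norm_sub_add_norm_sub ..
    _ ≤ 2 * (1 / 2) ^ p * 2 + (1 / 2) ^ p :=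
      add_le_add hmain
        (((htail p p le_rfl).norm_apply_sub_le m (hE.le_of_mem hm)).trans (hhalf p))
    _ = 5 * (1 / 2) ^ p := by ring

theorem exists_seq_closedBall_subset {Z : Type*} [PseudoMetricSpace Z]
    [TopologicalSpace.SeparableSpace Z] [Nonempty Z] {s : Set Z} (hs : Dense s) {r : ℕ → ℝ}
    (hr : Tendsto r atTop (𝓝 0)) :
    ∃ y : ℕ → s, ∀ U : Set Z, IsOpen U → U.Nonempty →
      ∃ p, Metric.closedBall (y p : Z) (r p) ⊆ U := by
  have : SecondCountableTopology Z := UniformSpace.secondCountable_of_separable Z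
  have : Nonempty s := hs.nonempty.to_subtype
  have hdense : DenseRange fun k => (TopologicalSpace.denseSeq s k : Z) :=
    hs.denseRange_val.comp (TopologicalSpace.denseRange_denseSeq s) continuous_subtype_val
  -- Pairing repeats every term of the dense sequence at arbitrarily late indices.
  refine ⟨fun p => TopologicalSpace.denseSeq s p.unpair.1, fun U hU hne => ?_⟩
  obtain ⟨k, hk⟩ := hdense.exists_mem_open hU hne
  obtain ⟨δ, hδ, hball⟩ := Metric.isOpen_iff.1 hU _ hk
  have hlate : Tendsto (Nat.pair k) atTop atTop :=
    tendsto_atTop_mono (Nat.right_le_pair k) tendsto_id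
  obtain ⟨l, hl⟩ := ((hr.comp hlate).eventually_lt_const hδ).exists
  refine ⟨Nat.pair k l, ?_⟩
  simp only [Nat.unpair_pair]
  exact (Metric.closedBall_subset_ball hl).trans hball

theorem stmt19_general [CompleteSpace X] [TopologicalSpace.SeparableSpace Y]
    (T : ℕ → X →L[𝕜] Y) (Y₀ : Set Y) (hY₀ : Dense Y₀) (S : ℕ → Y₀ → X)
    (h1 : ∀ y : Y₀, UnifUncondConv (fun m n => T m (S (m - n) y)) fun m => {n | n ≤ m})
    (h2 : ∀ y : Y₀, UnifUncondConv (fun m n => T m (S (m + n) y)) fun _ => Set.univ)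
    (h3 : ∀ y : Y₀, UnifUncondConv (fun (_ : Unit) n => S n y) fun _ => Set.univ)
    (h4 : ∀ y : Y₀, Tendsto (fun n => T n (S n y)) atTop (𝓝 (y : Y)))
    {ι : Type*} [Countable ι] {β : ι → ℕ → ℝ} (hpos : ∀ i k, 0 < β i k)
    (hβ : ∀ i, HasSlowGrowth (β i)) :
    ∃ x : X, ∀ α : ℕ → ℝ, CompletelyAdmissible α → (∃ i, Lesssim α (β i)) →
      ∀ U : Set Y, IsOpen U → U.Nonempty → 0 < alphaLowerDensity α {n | T n x ∈ U} := by
  have hradius : Tendsto (fun p : ℕ => 5 * (1 / 2 : ℝ) ^ p) atTop (𝓝 0) := by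
    simpa only [mul_zero] using (tendsto_pow_atTop_nhds_zero_of_lt_one (r := (1 / 2 : ℝ))
      one_half_pos.le one_half_lt_one).const_mul 5
  obtain ⟨y, hy⟩ := exists_seq_closedBall_subset hY₀ hradius
  have hN (q : ℕ) : ∃ K, 0 < K ∧ ∀ j ≤ q,
      TailBound T (fun n => S n (y j)) (y j : Y) ((1 / 4) ^ q) K :=
    ((eventually_gt_atTop 0).and <| (eventually_all_finite (Set.finite_Iic q)).2 fun j _ =>
      eventually_tailBound (h1 (y j)) (h2 (y j)) (h3 (y j)) (h4 (y j)) (by positivity)).exists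
  choose N hNpos htail using hN
  obtain ⟨E, hE, hdensity⟩ := exists_isSeparatedFamily_alphaLowerDensity_pos hpos hβ hNpos
  have hsummable (j : ℕ) : Summable fun n => S n (y j) := by
    simpa only [Set.indicator_univ] using (h3 (y j)).summable_indicator ()
  obtain ⟨x, hx⟩ := hE.exists_norm_apply_sub_le hNpos hsummable htail
  refine ⟨x, fun α hα hαβ U hU hne => ?_⟩
  obtain ⟨p, hp⟩ := hy U hU hne
  exact (hdensity α hα hαβ p).trans_le <| alphaLowerDensity_mono hα.1 fun n hn =>
    hp (mem_closedBall_iff_norm.2 (hx p n hn))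

end Universality

/-- Proposition 4.7: a sequence of operators satisfying the Frequent Universality
Criterion admits a vector which is `α`-frequently universal simultaneously for all
completely admissible `α` with `α ≲ 𝒟_s` for some `s`. -/
theorem stmt19 {𝕜 X Y : Type*} [NontriviallyNormedField 𝕜]
    [NormedAddCommGroup X] [NormedSpace 𝕜 X] [CompleteSpace X]
    [NormedAddCommGroup Y] [NormedSpace 𝕜 Y] [CompleteSpace Y]
    [TopologicalSpace.SeparableSpace Y]
    (T : ℕ → X →L[𝕜] Y)
    (Y₀ : Set Y) (hY₀ : Dense Y₀)
    (S : ℕ → Y₀ → X)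
    -- (1) ∑_{0 ≤ n ≤ m} T_m(S_{m−n}(y)), uniformly in m
    (h1 : ∀ y : Y₀, UnifUncondConv
      (fun m : ℕ => fun n : ℕ => T m (S (m - n) y)) (fun m => {n | n ≤ m}))
    -- (2) ∑_{n ≥ 0} T_m(S_{m+n}(y)), uniformly in m
    (h2 : ∀ y : Y₀, UnifUncondConv
      (fun m : ℕ => fun n : ℕ => T m (S (m + n) y)) (fun _ => Set.univ))
    -- (3) ∑_{n ≥ 0} S_n(y) converges unconditionally
    (h3 : ∀ y : Y₀, UnifUncondConv
      (fun _ : Unit => fun n : ℕ => S n y) (fun _ => Set.univ))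
    -- (4) T_n(S_n(y)) → y
    (h4 : ∀ y : Y₀, Filter.Tendsto (fun n : ℕ => T n (S n y)) Filter.atTop
      (nhds (y : Y))) :
    ∃ x : X, ∀ α : ℕ → ℝ, CompletelyAdmissible α →
      (∃ s : ℕ, Lesssim α (Dseq s)) →
      ∀ U : Set Y, IsOpen U → U.Nonempty →
        0 < alphaLowerDensity α {n : ℕ | T n x ∈ U} :=
  stmt19_general T Y₀ hY₀ S h1 h2 h3 h4 (fun _ _ => Real.exp_pos _) hasSlowGrowth_Dseq
end
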